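/- arXiv:math/0506272 — 3 statements merged into one kernel-verified Lean document; each statement's English description precedes it below -/
import Mathlib

section
/- Let H be a quasi-Hopf algebra, B a right H-comodule algebra, and v : H → B a morphism of right H-comodule algebras. Define E : B → B by E(b) = v(q¹)b₍₀₎v(βS(q²b₍₁₎)), set A = E(B) with H-action h▷b = E(v(h)b) and multiplication a*a′ = E(aa′). Then the map θ : A → B^v, θ(a) = (p¹▷a)v(p²), where p_R = p¹⊗p² = x¹ ⊗ x²βS(x³), is an injective morphism of left H-module algebras from (A, *, 1_B, ▷) to B^v. -/
open TensorProduct BigOperators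

/-- A quasi-bialgebra in the sense of Drinfeld. -/
structure QuasiBialgebra (k H : Type*) [Field k] [Ring H] [Algebra k H] where
  comul : H →ₐ[k] H ⊗[k] H
  counit : H →ₐ[k] k
  Phi : H ⊗[k] (H ⊗[k] H)
  PhiInv : H ⊗[k] (H ⊗[k] H)
  Phi_mul_inv : Phi * PhiInv = 1
  inv_mul_Phi : PhiInv * Phi = 1
  comul_coassoc : ∀ h : H,
    (Algebra.TensorProduct.map (AlgHom.id k H) comul) (comul h)
      = Phi * (Algebra.TensorProduct.assoc k k k H H H)
          ((Algebra.TensorProduct.map comul (AlgHom.id k H)) (comul h)) * PhiInv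
  counit_comul_right : ∀ h : H,
    (Algebra.TensorProduct.map (AlgHom.id k H) counit) (comul h) = h ⊗ₜ[k] (1 : k)
  counit_comul_left : ∀ h : H,
    (Algebra.TensorProduct.map counit (AlgHom.id k H)) (comul h) = (1 : k) ⊗ₜ[k] h
  pentagon :
    ((1 : H) ⊗ₜ[k] Phi)
      * (Algebra.TensorProduct.map (AlgHom.id k H)
          (((Algebra.TensorProduct.assoc k k k H H H).toAlgHom).comp
            (Algebra.TensorProduct.map comul (AlgHom.id k H)))) Phi
      * (Algebra.TensorProduct.map (AlgHom.id k H)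
          (Algebra.TensorProduct.map (AlgHom.id k H)
            (Algebra.TensorProduct.includeLeft : H →ₐ[k] H ⊗[k] H))) Phi
    = (Algebra.TensorProduct.map (AlgHom.id k H)
          (Algebra.TensorProduct.map (AlgHom.id k H) comul)) Phi
      * (Algebra.TensorProduct.assoc k k k H H (H ⊗[k] H))
          ((Algebra.TensorProduct.map comul (AlgHom.id k (H ⊗[k] H))) Phi)
  counit_Phi : (Algebra.TensorProduct.map (AlgHom.id k H)
      (Algebra.TensorProduct.map counit (AlgHom.id k H))) Phi = 1

/-- A quasi-Hopf algebra: a quasi-bialgebra with antipode `S` (a bijective algebra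
anti-automorphism with inverse `Sinv`) and elements `alpha`, `beta`, normalized so that
`counit alpha = counit beta = 1`.  Identities involving Sweedler components are stated
universally over all finite representations of the relevant tensors. -/
structure QuasiHopfAlgebra (k H : Type*) [Field k] [Ring H] [Algebra k H] extends
    QuasiBialgebra k H where
  alpha : H
  beta : H
  S : H →ₗ[k] H
  Sinv : H →ₗ[k] H
  S_one : S 1 = 1
  S_mul : ∀ a b : H, S (a * b) = S b * S a
  Sinv_S : ∀ h : H, Sinv (S h) = h
  S_Sinv : ∀ h : H, S (Sinv h) = h
  antipode_left : ∀ h : H, ∀ (n : ℕ) (d1 d2 : Fin n → H),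
    comul h = ∑ i, d1 i ⊗ₜ[k] d2 i →
    ∑ i, S (d1 i) * alpha * d2 i = counit h • alpha
  antipode_right : ∀ h : H, ∀ (n : ℕ) (d1 d2 : Fin n → H),
    comul h = ∑ i, d1 i ⊗ₜ[k] d2 i →
    ∑ i, d1 i * beta * S (d2 i) = counit h • beta
  antipode_Phi : ∀ (n : ℕ) (X1 X2 X3 : Fin n → H),
    Phi = ∑ i, X1 i ⊗ₜ[k] (X2 i ⊗ₜ[k] X3 i) →
    ∑ i, X1 i * beta * S (X2 i) * alpha * X3 i = 1
  antipode_PhiInv : ∀ (n : ℕ) (x1 x2 x3 : Fin n → H),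
    PhiInv = ∑ i, x1 i ⊗ₜ[k] (x2 i ⊗ₜ[k] x3 i) →
    ∑ i, S (x1 i) * alpha * x2 i * beta * S (x3 i) = 1
  counit_alpha : counit alpha = 1
  counit_beta : counit beta = 1
/-- A right `H`-comodule algebra over a quasi-bialgebra `Q`. -/
structure RightComoduleAlgebra {k H : Type*} [Field k] [Ring H] [Algebra k H]
    (Q : QuasiBialgebra k H) (B : Type*) [Ring B] [Algebra k B] where
  coact : B →ₐ[k] B ⊗[k] H
  PhiRho : B ⊗[k] (H ⊗[k] H)
  PhiRhoInv : B ⊗[k] (H ⊗[k] H)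
  PhiRho_mul_inv : PhiRho * PhiRhoInv = 1
  inv_mul_PhiRho : PhiRhoInv * PhiRho = 1
  coact_coassoc : ∀ b : B,
    PhiRho * (Algebra.TensorProduct.assoc k k k B H H)
        ((Algebra.TensorProduct.map coact (AlgHom.id k H)) (coact b))
      = (Algebra.TensorProduct.map (AlgHom.id k B) Q.comul) (coact b) * PhiRho
  pentagon :
    ((1 : B) ⊗ₜ[k] Q.Phi)
      * (Algebra.TensorProduct.map (AlgHom.id k B)
          (((Algebra.TensorProduct.assoc k k k H H H).toAlgHom).comp
            (Algebra.TensorProduct.map Q.comul (AlgHom.id k H)))) PhiRho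
      * (Algebra.TensorProduct.map (AlgHom.id k B)
          (Algebra.TensorProduct.map (AlgHom.id k H)
            (Algebra.TensorProduct.includeLeft : H →ₐ[k] H ⊗[k] H))) PhiRho
    = (Algebra.TensorProduct.map (AlgHom.id k B)
          (Algebra.TensorProduct.map (AlgHom.id k H) Q.comul)) PhiRho
      * (Algebra.TensorProduct.assoc k k k B H (H ⊗[k] H))
          ((Algebra.TensorProduct.map coact (AlgHom.id k (H ⊗[k] H))) PhiRho)
  counit_coact : ∀ b : B,
    (Algebra.TensorProduct.map (AlgHom.id k B) Q.counit) (coact b) = b ⊗ₜ[k] (1 : k)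
  counit_PhiRho_mid : (Algebra.TensorProduct.map (AlgHom.id k B)
      (Algebra.TensorProduct.map Q.counit (AlgHom.id k H))) PhiRho = 1
  counit_PhiRho_right : (Algebra.TensorProduct.map (AlgHom.id k B)
      (Algebra.TensorProduct.map (AlgHom.id k H) Q.counit)) PhiRho = 1

/-- `v : H → B` is a morphism of right `H`-comodule algebras from `H` (with its canonical
right `H`-comodule algebra structure `ρ = Δ`, `Φ_ρ = Φ`) to `B`. -/
def IsComodAlgMorphismFromH {k H B : Type*} [Field k] [Ring H] [Algebra k H]
    [Ring B] [Algebra k B] {Q : QuasiBialgebra k H}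
    (R : RightComoduleAlgebra Q B) (v : H →ₐ[k] B) : Prop :=
  (∀ h : H, R.coact (v h) = (Algebra.TensorProduct.map v (AlgHom.id k H)) (Q.comul h))
  ∧ R.PhiRho = (Algebra.TensorProduct.map v (AlgHom.id k (H ⊗[k] H))) Q.Phi

/-- Characterization of the canonical projection `E : B → B`,
`E(b) = v(q¹) b₍₀₎ v(β S(q² b₍₁₎))`, where `q_R = q¹ ⊗ q² = X¹ ⊗ S⁻¹(α X³) X²`,
stated universally over finite representations of `Φ` and of `ρ(b)`. -/
def IsCanonicalProjection {k H B : Type*} [Field k] [Ring H] [Algebra k H]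
    [Ring B] [Algebra k B] (Q : QuasiHopfAlgebra k H)
    (R : RightComoduleAlgebra Q.toQuasiBialgebra B) (v : H →ₐ[k] B) (E : B →ₗ[k] B) : Prop :=
  ∀ (b : B) (n : ℕ) (X1 X2 X3 : Fin n → H),
    Q.Phi = ∑ i, X1 i ⊗ₜ[k] (X2 i ⊗ₜ[k] X3 i) →
    ∀ (p : ℕ) (b0 : Fin p → B) (b1 : Fin p → H),
      R.coact b = ∑ j, b0 j ⊗ₜ[k] b1 j →
      E b = ∑ i, ∑ j,
        v (X1 i) * b0 j * v (Q.beta * Q.S (Q.Sinv (Q.alpha * X3 i) * X2 i * b1 j))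

namespace QHproof

open Algebra.TensorProduct

lemma exists_rep {k M N : Type*} [Field k] [AddCommGroup M] [Module k M] [AddCommGroup N]
    [Module k N] (w : M ⊗[k] N) :
    ∃ (n : ℕ) (a : Fin n → M) (b : Fin n → N), w = ∑ i, a i ⊗ₜ[k] b i := by
  induction w using TensorProduct.induction_on with
  | zero => exact ⟨0, fun _ => 0, fun _ => 0, by simp⟩
  | tmul x y => exact ⟨1, fun _ => x, fun _ => y, by simp⟩
  | add x y hx hy =>
    obtain ⟨n, a, b, rfl⟩ := hx
    obtain ⟨m, c, d, rfl⟩ := hy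
    exact ⟨n + m, Fin.append a c, Fin.append b d, by simp [Fin.sum_univ_add]⟩

lemma exists_rep3 {k M N P : Type*} [Field k] [AddCommGroup M] [Module k M] [AddCommGroup N]
    [Module k N] [AddCommGroup P] [Module k P] (w : M ⊗[k] (N ⊗[k] P)) :
    ∃ (n : ℕ) (a : Fin n → M) (b : Fin n → N) (c : Fin n → P),
      w = ∑ i, a i ⊗ₜ[k] (b i ⊗ₜ[k] c i) := by
  induction w using TensorProduct.induction_on with
  | zero => exact ⟨0, fun _ => 0, fun _ => 0, fun _ => 0, by simp⟩
  | tmul x y =>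
    obtain ⟨n, b, c, rfl⟩ := exists_rep y
    exact ⟨n, fun _ => x, b, c, by simp [TensorProduct.tmul_sum]⟩
  | add x y hx hy =>
    obtain ⟨n, a, b, c, rfl⟩ := hx
    obtain ⟨m, d, e, f, rfl⟩ := hy
    exact ⟨n + m, Fin.append a d, Fin.append b e, Fin.append c f, by simp [Fin.sum_univ_add]⟩

section
variable {k H : Type*} [Field k] [Ring H] [Algebra k H] (Q : QuasiHopfAlgebra k H)

/-- `S(a) α b` -/
noncomputable def al : H ⊗[k] H →ₗ[k] H :=
  LinearMap.mul' k H ∘ₗ TensorProduct.map (LinearMap.mulRight k Q.alpha ∘ₗ Q.S) LinearMap.id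

/-- `a β S(b)` -/
noncomputable def be : H ⊗[k] H →ₗ[k] H :=
  LinearMap.mul' k H ∘ₗ TensorProduct.map (LinearMap.mulRight k Q.beta) Q.S

/-- `S(a) α b β S(c)` -/
noncomputable def kap : H ⊗[k] (H ⊗[k] H) →ₗ[k] H :=
  LinearMap.mul' k H ∘ₗ TensorProduct.map (LinearMap.mulRight k Q.alpha ∘ₗ Q.S) (be Q)

/-- `a β S(b) α c` -/
noncomputable def kap' : H ⊗[k] (H ⊗[k] H) →ₗ[k] H :=
  LinearMap.mul' k H ∘ₗ TensorProduct.map (LinearMap.mulRight k Q.beta) (al Q)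

@[simp] lemma al_tmul (a b : H) : al Q (a ⊗ₜ b) = Q.S a * Q.alpha * b := by simp [al]
@[simp] lemma be_tmul (a b : H) : be Q (a ⊗ₜ b) = a * Q.beta * Q.S b := by simp [be]
@[simp] lemma kap_tmul (a b c : H) :
    kap Q (a ⊗ₜ (b ⊗ₜ c)) = Q.S a * Q.alpha * (b * Q.beta * Q.S c) := by simp [kap]
@[simp] lemma kap'_tmul (a b c : H) :
    kap' Q (a ⊗ₜ (b ⊗ₜ c)) = a * Q.beta * (Q.S b * Q.alpha * c) := by simp [kap']

lemma al_comul (h : H) : al Q (Q.comul h) = Q.counit h • Q.alpha := by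
  obtain ⟨n, a, b, e⟩ := exists_rep (Q.comul h)
  rw [← Q.antipode_left h n a b e, e]; simp

lemma be_comul (h : H) : be Q (Q.comul h) = Q.counit h • Q.beta := by
  obtain ⟨n, a, b, e⟩ := exists_rep (Q.comul h)
  rw [← Q.antipode_right h n a b e, e]; simp

lemma kap'_Phi : kap' Q Q.Phi = 1 := by
  obtain ⟨n, a, b, c, e⟩ := exists_rep3 Q.Phi
  rw [← Q.antipode_Phi n a b c e, e]; simp [mul_assoc]

lemma kap_PhiInv : kap Q Q.PhiInv = 1 := by
  obtain ⟨n, a, b, c, e⟩ := exists_rep3 Q.PhiInv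
  rw [← Q.antipode_PhiInv n a b c e, e]; simp [mul_assoc]

lemma counit_S (h : H) : Q.counit (Q.S h) = Q.counit h := by
  have h1 := congrArg Q.counit (al_comul Q h)
  have key : ∀ w : H ⊗[k] H, Q.counit (al Q w) =
      Q.counit (Q.S (Algebra.TensorProduct.rid k k H
        (Algebra.TensorProduct.map (AlgHom.id k H) Q.counit w))) := by
    intro w
    induction w using TensorProduct.induction_on with
    | zero => simp
    | tmul a b => simp [Q.counit_alpha, mul_comm]
    | add x y hx hy => simp [hx, hy]
  rw [key, Q.counit_comul_right] at h1
  simpa [Q.counit_alpha] using h1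

noncomputable def e1 : H ⊗[k] (H ⊗[k] H) →ₐ[k] H ⊗[k] H :=
  (Algebra.TensorProduct.lid k (H ⊗[k] H)).toAlgHom.comp
    (Algebra.TensorProduct.map Q.counit (AlgHom.id k (H ⊗[k] H)))
noncomputable def e2 : H ⊗[k] (H ⊗[k] H) →ₐ[k] H ⊗[k] H :=
  Algebra.TensorProduct.map (AlgHom.id k H) ((Algebra.TensorProduct.lid k H).toAlgHom.comp
    (Algebra.TensorProduct.map Q.counit (AlgHom.id k H)))
noncomputable def e3 : H ⊗[k] (H ⊗[k] H) →ₐ[k] H ⊗[k] H :=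
  Algebra.TensorProduct.map (AlgHom.id k H) ((Algebra.TensorProduct.rid k k H).toAlgHom.comp
    (Algebra.TensorProduct.map (AlgHom.id k H) Q.counit))
@[simp] lemma e1_tmul (a b c : H) : e1 Q (a ⊗ₜ (b ⊗ₜ c)) = Q.counit a • (b ⊗ₜ c) := by simp [e1]
@[simp] lemma e2_tmul (a b c : H) : e2 Q (a ⊗ₜ (b ⊗ₜ c)) = Q.counit b • (a ⊗ₜ c) := by simp [e2]
@[simp] lemma e3_tmul (a b c : H) : e3 Q (a ⊗ₜ (b ⊗ₜ c)) = Q.counit c • (a ⊗ₜ b) := by simp [e3]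

abbrev H4 (k H : Type*) [Field k] [Ring H] [Algebra k H] := H ⊗[k] (H ⊗[k] (H ⊗[k] H))

noncomputable def A1 : H ⊗[k] (H ⊗[k] H) →ₐ[k] H4 k H := Algebra.TensorProduct.includeRight
noncomputable def A2 : H ⊗[k] (H ⊗[k] H) →ₐ[k] H4 k H :=
  Algebra.TensorProduct.map (AlgHom.id k H)
          (((Algebra.TensorProduct.assoc k k k H H H).toAlgHom).comp
            (Algebra.TensorProduct.map Q.comul (AlgHom.id k H)))
noncomputable def A3 : H ⊗[k] (H ⊗[k] H) →ₐ[k] H4 k H :=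
  Algebra.TensorProduct.map (AlgHom.id k H)
          (Algebra.TensorProduct.map (AlgHom.id k H)
            (Algebra.TensorProduct.includeLeft : H →ₐ[k] H ⊗[k] H))
noncomputable def B1 : H ⊗[k] (H ⊗[k] H) →ₐ[k] H4 k H :=
  Algebra.TensorProduct.map (AlgHom.id k H)
          (Algebra.TensorProduct.map (AlgHom.id k H) Q.comul)
noncomputable def B2 : H ⊗[k] (H ⊗[k] H) →ₐ[k] H4 k H :=
  (Algebra.TensorProduct.assoc k k k H H (H ⊗[k] H)).toAlgHom.comp
          (Algebra.TensorProduct.map Q.comul (AlgHom.id k (H ⊗[k] H)))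

noncomputable def a22 (a d : H) : H ⊗[k] H →ₗ[k] H4 k H :=
  TensorProduct.mk k H _ a ∘ₗ (TensorProduct.assoc k H H H).toLinearMap ∘ₗ
    (TensorProduct.mk k _ H).flip d
@[simp] lemma a22_tmul (a d b c : H) : a22 (k := k) a d (b ⊗ₜ c) = a ⊗ₜ (b ⊗ₜ (c ⊗ₜ d)) := by
  simp [a22]
lemma A1_apply (u : H ⊗[k] (H ⊗[k] H)) : A1 u = 1 ⊗ₜ u := rfl
lemma A2_tmul (a b c : H) : A2 Q (a ⊗ₜ (b ⊗ₜ c)) = a22 a c (Q.comul b) := by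
  simp [A2, a22]; rfl
lemma A3_tmul (a b c : H) : A3 (k := k) (a ⊗ₜ (b ⊗ₜ c)) = a ⊗ₜ (b ⊗ₜ (c ⊗ₜ 1)) := by simp [A3]
lemma B1_tmul (a b c : H) : B1 Q (a ⊗ₜ (b ⊗ₜ c)) = a ⊗ₜ (b ⊗ₜ Q.comul c) := by simp [B1]
lemma B2_tmul (a : H) (w : H ⊗[k] H) :
  B2 Q (a ⊗ₜ w) = TensorProduct.assoc k H H (H ⊗[k] H) (Q.comul a ⊗ₜ w) := by
  simp [B2]; rfl

lemma pent : A1 Q.Phi * A2 Q Q.Phi * A3 Q.Phi = B1 Q Q.Phi * B2 Q Q.Phi := Q.pentagon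

lemma hom_inv {C : Type*} [Semiring C] [Algebra k C] (f : H ⊗[k] (H ⊗[k] H) →ₐ[k] C) :
    f Q.Phi * f Q.PhiInv = 1 ∧ f Q.PhiInv * f Q.Phi = 1 := by
  rw [← map_mul, ← map_mul, Q.Phi_mul_inv, Q.inv_mul_Phi, map_one]; simp

lemma pent_aux {C : Type*} [Monoid C] {a b c d e a' b' c' d' e' : C}
    (ha : a * a' = 1 ∧ a' * a = 1) (hb : b * b' = 1 ∧ b' * b = 1)
    (hc : c * c' = 1 ∧ c' * c = 1) (hd : d * d' = 1 ∧ d' * d = 1)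
    (he : e * e' = 1 ∧ e' * e = 1) (h : a * b * c = d * e) :
    c * e' = b' * a' * d ∧ e * c' = d' * a * b ∧ a' * d = b * c * e' := by
  refine ⟨?_, ?_, ?_⟩
  · calc c * e' = b' * (a' * a) * b * c * e' := by rw [ha.2]; simp [hb.2]
      _ = b' * a' * (a * b * c) * e' := by simp only [mul_assoc]
      _ = _ := by rw [h]; simp only [mul_assoc, he.1, mul_one]
  · calc e * c' = d' * (d * e) * c' := by rw [← mul_assoc d', hd.2, one_mul]
      _ = _ := by rw [← h]; simp only [mul_assoc, hc.1, mul_one]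
  · calc a' * d = a' * (d * e) * e' := by simp only [mul_assoc, he.1, mul_one]
      _ = _ := by rw [← h]; simp only [← mul_assoc, ha.2, one_mul]

lemma pent3 :
    A3 Q.Phi * B2 Q Q.PhiInv = A2 Q Q.PhiInv * A1 Q.PhiInv * B1 Q Q.Phi ∧
    B2 Q Q.Phi * A3 Q.PhiInv = B1 Q Q.PhiInv * A1 Q.Phi * A2 Q Q.Phi ∧
    A1 Q.PhiInv * B1 Q Q.Phi = A2 Q Q.Phi * A3 Q.Phi * B2 Q Q.PhiInv := by
  have h1 := hom_inv Q (A1 (k := k) (H := H))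
  have h2 := hom_inv Q (A2 Q)
  have h3 := hom_inv Q (A3 (k := k) (H := H))
  have h4 := hom_inv Q (B1 Q)
  have h5 := hom_inv Q (B2 Q)
  exact pent_aux (C := H4 k H) h1 h2 h3 h4 h5 (pent Q)

lemma map_PhiInv {C : Type*} [Semiring C] [Algebra k C] (f : H ⊗[k] (H ⊗[k] H) →ₐ[k] C)
    (h : f Q.Phi = 1) : f Q.PhiInv = 1 := by
  have := (hom_inv Q f).1
  rwa [h, one_mul] at this

lemma e2_Phi : e2 Q Q.Phi = 1 := by
  have h := congrArg (Algebra.TensorProduct.map (AlgHom.id k H)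
    ((Algebra.TensorProduct.lid k H).toAlgHom)) Q.counit_Phi
  rw [map_one] at h
  rw [← h]
  rw [← AlgHom.comp_apply]
  congr 1
  ext <;> simp [e2]

/-- counit on slot 2 of four -/
noncomputable def f2 : H4 k H →ₐ[k] H ⊗[k] (H ⊗[k] H) :=
  Algebra.TensorProduct.map (AlgHom.id k H)
   ((Algebra.TensorProduct.lid k (H ⊗[k] H)).toAlgHom.comp
    (Algebra.TensorProduct.map Q.counit (AlgHom.id k (H ⊗[k] H))))
noncomputable def f3 : H4 k H →ₐ[k] H ⊗[k] (H ⊗[k] H) :=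
  Algebra.TensorProduct.map (AlgHom.id k H) (e2 Q)
@[simp] lemma f2_tmul (a b : H) (w : H ⊗[k] H) : f2 Q (a ⊗ₜ (b ⊗ₜ w)) =
   Q.counit b • (a ⊗ₜ w) := by simp [f2]
@[simp] lemma f3_tmul (a b c d : H) : f3 Q (a ⊗ₜ (b ⊗ₜ (c ⊗ₜ d))) =
   Q.counit c • (a ⊗ₜ (b ⊗ₜ d)) := by simp [f3]

lemma cr (h : H) : Algebra.TensorProduct.rid k k H
    (Algebra.TensorProduct.map (AlgHom.id k H) Q.counit (Q.comul h)) = h := by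
  rw [Q.counit_comul_right]; simp
lemma cl (h : H) : Algebra.TensorProduct.lid k H
    (Algebra.TensorProduct.map Q.counit (AlgHom.id k H) (Q.comul h)) = h := by
  rw [Q.counit_comul_left]; simp

/-- induction to pure tensors -/
lemma ind3 {k M N P : Type*} [Field k] [AddCommGroup M] [Module k M] [AddCommGroup N]
    [Module k N] [AddCommGroup P] [Module k P] {X : Type*} [AddCommGroup X] [Module k X]
    {f g : M ⊗[k] (N ⊗[k] P) →ₗ[k] X}
    (h : ∀ a b c, f (a ⊗ₜ (b ⊗ₜ c)) = g (a ⊗ₜ (b ⊗ₜ c))) (u) : f u = g u := by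
  have : f = g := by
    ext a b c; exact h a b c
  rw [this]

lemma ind4 {k M N P L : Type*} [Field k] [AddCommGroup M] [Module k M] [AddCommGroup N]
    [Module k N] [AddCommGroup P] [Module k P] [AddCommGroup L] [Module k L]
    {X : Type*} [AddCommGroup X] [Module k X]
    {f g : M ⊗[k] (N ⊗[k] (P ⊗[k] L)) →ₗ[k] X}
    (h : ∀ a b c d, f (a ⊗ₜ (b ⊗ₜ (c ⊗ₜ d))) = g (a ⊗ₜ (b ⊗ₜ (c ⊗ₜ d)))) (u) : f u = g u := by
  have : f = g := by
    ext a b c d; exact h a b c d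
  rw [this]

lemma ind2 {k M N : Type*} [Field k] [AddCommGroup M] [Module k M] [AddCommGroup N]
    [Module k N] {X : Type*} [AddCommGroup X] [Module k X]
    {f g : M ⊗[k] N →ₗ[k] X}
    (h : ∀ a b, f (a ⊗ₜ b) = g (a ⊗ₜ b)) (u) : f u = g u := by
  have : f = g := by
    ext a b; exact h a b
  rw [this]

lemma e1_Phi : e1 Q Q.Phi = 1 := by
  have h := congrArg (f2 Q) (pent Q)
  simp only [map_mul] at h
  have h1 : f2 Q (A1 Q.Phi) = 1 ⊗ₜ e1 Q Q.Phi := by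
    refine ind3 (f := (f2 Q).toLinearMap ∘ₗ (A1).toLinearMap)
      (g := TensorProduct.mk k _ _ 1 ∘ₗ (e1 Q).toLinearMap) (fun a b c => ?_) Q.Phi
    simp [A1_apply]
  have h2 : f2 Q (A2 Q Q.Phi) = Q.Phi := by
    refine ind3 (f := (f2 Q).toLinearMap ∘ₗ (A2 Q).toLinearMap)
      (g := LinearMap.id) (fun a b c => ?_) Q.Phi
    have : ∀ w, f2 Q (a22 a c w) = a ⊗ₜ ((Algebra.TensorProduct.lid k H
       (Algebra.TensorProduct.map Q.counit (AlgHom.id k H) w)) ⊗ₜ c) := by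
      intro w
      induction w using TensorProduct.induction_on with
      | zero => simp
      | tmul a b => simp [smul_tmul']; rw [smul_tmul, smul_tmul']
      | add x y hx hy => simp only [map_add, hx, hy, tmul_add, add_tmul]
    simp [A2_tmul, this, cl]
  have i2 : Algebra.TensorProduct.map (AlgHom.id k H)
    (Algebra.TensorProduct.includeLeft : H →ₐ[k] H ⊗[k] H) (e2 Q Q.Phi) = f2 Q (A3 Q.Phi) := by
    refine ind3 (f := (Algebra.TensorProduct.map (AlgHom.id k H)
    (Algebra.TensorProduct.includeLeft : H →ₐ[k] H ⊗[k] H)).toLinearMap ∘ₗ (e2 Q).toLinearMap)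
     (g := (f2 Q).toLinearMap ∘ₗ (A3).toLinearMap)  (fun a b c => ?_) Q.Phi
    simp [A3_tmul]
  have i3 : Algebra.TensorProduct.map (AlgHom.id k H) Q.comul (e2 Q Q.Phi) = f2 Q (B1 Q Q.Phi) := by
    refine ind3 (f := (Algebra.TensorProduct.map (AlgHom.id k H)
    Q.comul).toLinearMap ∘ₗ (e2 Q).toLinearMap)
     (g := (f2 Q).toLinearMap ∘ₗ (B1 Q).toLinearMap)  (fun a b c => ?_) Q.Phi
    simp [B1_tmul]
  have h5 : f2 Q (B2 Q Q.Phi) = Q.Phi := by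
    refine ind3 (f := (f2 Q).toLinearMap ∘ₗ (B2 Q).toLinearMap)
      (g := LinearMap.id) (fun a b c => ?_) Q.Phi
    have : ∀ w, f2 Q (TensorProduct.assoc k H H (H ⊗[k] H) (w ⊗ₜ (b ⊗ₜ c)))
      = (Algebra.TensorProduct.rid k k H
       (Algebra.TensorProduct.map (AlgHom.id k H) Q.counit w)) ⊗ₜ (b ⊗ₜ c) := by
      intro w
      induction w using TensorProduct.induction_on with
      | zero => simp
      | tmul a b => simp [smul_tmul']
      | add x y hx hy => simp only [map_add, hx, hy, add_tmul]
    simp [B2_tmul, this, cr]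
  rw [h1, h2, h5, ← i2, ← i3, e2_Phi, map_one, map_one, mul_one, one_mul] at h
  have h' := congrArg (· * Q.PhiInv) h
  simp only [mul_assoc, Q.Phi_mul_inv, mul_one] at h'
  have h6 := congrArg (e1 Q) h'
  have : ∀ w, e1 Q (1 ⊗ₜ w) = w := by intro w; simp [e1]
  rw [this, map_one] at h6
  exact h6

lemma e3_Phi : e3 Q Q.Phi = 1 := by
  have h := congrArg (f3 Q) (pent Q)
  simp only [map_mul] at h
  have i2 : Algebra.TensorProduct.includeRight (e2 Q Q.Phi) = f3 Q (A1 Q.Phi) := by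
    refine ind3 (f := (Algebra.TensorProduct.includeRight : _ →ₐ[k] H ⊗[k] _).toLinearMap ∘ₗ (e2 Q).toLinearMap)
     (g := (f3 Q).toLinearMap ∘ₗ (A1).toLinearMap)  (fun a b c => ?_) Q.Phi
    simp [A1_apply]
  have h2 : f3 Q (A2 Q Q.Phi) = Q.Phi := by
    refine ind3 (f := (f3 Q).toLinearMap ∘ₗ (A2 Q).toLinearMap)
      (g := LinearMap.id) (fun a b c => ?_) Q.Phi
    have : ∀ w, f3 Q (a22 a c w) = a ⊗ₜ ((Algebra.TensorProduct.rid k k H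
       (Algebra.TensorProduct.map (AlgHom.id k H) Q.counit w)) ⊗ₜ c) := by
      intro w
      induction w using TensorProduct.induction_on with
      | zero => simp
      | tmul a b => simp [smul_tmul']; rw [smul_tmul, smul_tmul']
      | add x y hx hy => simp only [map_add, hx, hy, tmul_add, add_tmul]
    simp [A2_tmul, this, cr]
  have h1 : f3 Q (A3 Q.Phi) = TensorProduct.assoc k H H H (e3 Q Q.Phi ⊗ₜ 1) := by
    refine ind3 (f := (f3 Q).toLinearMap ∘ₗ (A3).toLinearMap)
      (g := (TensorProduct.assoc k H H H).toLinearMap ∘ₗ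
        (TensorProduct.mk k _ _).flip 1 ∘ₗ (e3 Q).toLinearMap) (fun a b c => ?_) Q.Phi
    simp [A3_tmul, smul_tmul']
  have h5 : f3 Q (B1 Q Q.Phi) = Q.Phi := by
    refine ind3 (f := (f3 Q).toLinearMap ∘ₗ (B1 Q).toLinearMap)
      (g := LinearMap.id) (fun a b c => ?_) Q.Phi
    have : ∀ w, f3 Q (a ⊗ₜ (b ⊗ₜ w))
      = a ⊗ₜ (b ⊗ₜ (Algebra.TensorProduct.lid k H
       (Algebra.TensorProduct.map Q.counit (AlgHom.id k H) w))) := by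
      intro w
      induction w using TensorProduct.induction_on with
      | zero => simp
      | tmul a b => simp
      | add x y hx hy => simp only [map_add, hx, hy, tmul_add]
    simp [B1_tmul, this, cl]
  have i3 : Algebra.TensorProduct.assoc k k k H H H (Algebra.TensorProduct.map Q.comul (AlgHom.id k H) (e2 Q Q.Phi)) = f3 Q (B2 Q Q.Phi) := by
    refine ind3 (f := (Algebra.TensorProduct.assoc k k k H H H).toAlgHom.toLinearMap ∘ₗ (Algebra.TensorProduct.map Q.comul (AlgHom.id k H)
    ).toLinearMap ∘ₗ (e2 Q).toLinearMap)
     (g := (f3 Q).toLinearMap ∘ₗ (B2 Q).toLinearMap)  (fun a b c => ?_) Q.Phi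
    simp only [LinearMap.comp_apply, AlgHom.toLinearMap_apply, B2_tmul, e2_tmul, map_smul,
      Algebra.TensorProduct.map_tmul, AlgHom.id_apply]
    generalize Q.comul a = w
    induction w using TensorProduct.induction_on with
      | zero => simp
      | tmul a b => simp
      | add x y hx hy => simp only [map_add, hx, hy, add_tmul, smul_add]
  rw [h1, h2, h5, ← i2, ← i3, e2_Phi, map_one, map_one, map_one, mul_one, one_mul] at h
  have h' := congrArg (Q.PhiInv * ·) h
  simp only [← mul_assoc, Q.inv_mul_Phi, one_mul] at h'
  have h6 := congrArg (e3 Q) h'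
  have : ∀ w, e3 Q (TensorProduct.assoc k H H H (w ⊗ₜ 1)) = w := by
    intro w
    induction w using TensorProduct.induction_on with
      | zero => simp
      | tmul a b => simp
      | add x y hx hy => simp only [map_add, hx, hy, add_tmul]
  rw [this, map_one] at h6
  exact h6

lemma e1_PhiInv : e1 Q Q.PhiInv = 1 := map_PhiInv Q _ (e1_Phi Q)
lemma e2_PhiInv : e2 Q Q.PhiInv = 1 := map_PhiInv Q _ (e2_Phi Q)
lemma e3_PhiInv : e3 Q Q.PhiInv = 1 := map_PhiInv Q _ (e3_Phi Q)

end
section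
set_option maxSynthPendingDepth 6
variable {k H : Type*} [Field k] [Ring H] [Algebra k H] (Q : QuasiHopfAlgebra k H)

lemma mas4 (a b c : H4 k H) : a * b * c = a * (b * c) := mul_assoc a b c
lemma one4 (a : H4 k H) : 1 * a = a := one_mul a
lemma four1 (a : H4 k H) : a * 1 = a := mul_one a

/-- `a ⊗ b ↦ a ⊗ 1 ⊗ 1 ⊗ b` -/
noncomputable def j14 : H ⊗[k] H →ₐ[k] H4 k H :=
  Algebra.TensorProduct.map (AlgHom.id k H)
    ((Algebra.TensorProduct.includeRight : H ⊗[k] H →ₐ[k] H ⊗[k] (H ⊗[k] H)).comp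
      (Algebra.TensorProduct.includeRight : H →ₐ[k] H ⊗[k] H))
noncomputable def j12 : H ⊗[k] H →ₐ[k] H4 k H :=
  Algebra.TensorProduct.map (AlgHom.id k H)
    (Algebra.TensorProduct.includeLeft : H →ₐ[k] H ⊗[k] (H ⊗[k] H))
noncomputable def j34 : H ⊗[k] H →ₐ[k] H4 k H :=
  (Algebra.TensorProduct.includeRight : H ⊗[k] (H ⊗[k] H) →ₐ[k] H4 k H).comp
      (Algebra.TensorProduct.includeRight : H ⊗[k] H →ₐ[k] H ⊗[k] (H ⊗[k] H))
@[simp] lemma j14_tmul (a b : H) : j14 (k := k) (a ⊗ₜ b) = a ⊗ₜ (1 ⊗ₜ (1 ⊗ₜ b)) := by simp [j14]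
@[simp] lemma j12_tmul (a b : H) : j12 (k := k) (a ⊗ₜ b) = a ⊗ₜ (b ⊗ₜ (1 ⊗ₜ 1)) := by
  simp [j12, Algebra.TensorProduct.one_def]
@[simp] lemma j34_tmul (a b : H) : j34 (k := k) (a ⊗ₜ b) = 1 ⊗ₜ (1 ⊗ₜ (a ⊗ₜ b)) := by simp [j34]

noncomputable def K1 : H4 k H →ₗ[k] H ⊗[k] H := TensorProduct.map LinearMap.id (kap Q)
noncomputable def K4 : H4 k H →ₗ[k] H ⊗[k] H := TensorProduct.map LinearMap.id (kap' Q)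
noncomputable def K5 : H4 k H →ₗ[k] H ⊗[k] H :=
  TensorProduct.map (kap' Q) LinearMap.id ∘ₗ (TensorProduct.assoc k H (H ⊗[k] H) H).symm.toLinearMap
   ∘ₗ TensorProduct.map LinearMap.id (TensorProduct.assoc k H H H).symm.toLinearMap
@[simp] lemma K1_tmul (a b c d : H) : K1 Q (a ⊗ₜ (b ⊗ₜ (c ⊗ₜ d))) =
   a ⊗ₜ (Q.S b * Q.alpha * (c * Q.beta * Q.S d)) := by simp [K1]
@[simp] lemma K4_tmul (a b c d : H) : K4 Q (a ⊗ₜ (b ⊗ₜ (c ⊗ₜ d))) =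
   a ⊗ₜ (b * Q.beta * (Q.S c * Q.alpha * d)) := by simp [K4]
@[simp] lemma K5_tmul (a b c d : H) : K5 Q (a ⊗ₜ (b ⊗ₜ (c ⊗ₜ d))) =
   (a * Q.beta * (Q.S b * Q.alpha * c)) ⊗ₜ d := by simp [K5]

lemma K1_A2 (u : H ⊗[k] (H ⊗[k] H)) (w : H4 k H) :
    K1 Q (A2 Q u * w) = K1 Q (j14 (e2 Q u) * w) := by
  refine ind4 (f := K1 Q ∘ₗ LinearMap.mulLeft k (A2 Q u))
    (g := K1 Q ∘ₗ LinearMap.mulLeft k (j14 (e2 Q u))) (fun a b c d => ?_) w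
  refine ind3 (f := K1 Q ∘ₗ LinearMap.mulRight k (a ⊗ₜ[k] (b ⊗ₜ[k] (c ⊗ₜ[k] d))) ∘ₗ (A2 Q).toLinearMap)
    (g := K1 Q ∘ₗ LinearMap.mulRight k (a ⊗ₜ[k] (b ⊗ₜ[k] (c ⊗ₜ[k] d))) ∘ₗ j14.toLinearMap ∘ₗ
      (e2 Q).toLinearMap) (fun u1 u2 u3 => ?_) u
  have : ∀ z, K1 Q (a22 u1 u3 z * a ⊗ₜ (b ⊗ₜ (c ⊗ₜ d))) =
     (u1 * a) ⊗ₜ (Q.S b * al Q z * (c * Q.beta * Q.S (u3 * d))) := by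
    intro z
    induction z using TensorProduct.induction_on with
    | zero => simp
    | tmul x y => simp [Q.S_mul, mul_assoc]
    | add x y hx hy => simp only [map_add, hx, hy, tmul_add, add_mul, mul_add]
  simp only [LinearMap.comp_apply, AlgHom.toLinearMap_apply, LinearMap.mulLeft_apply,
    LinearMap.mulRight_apply, A2_tmul, this]
  simp [al_comul, mul_assoc]

lemma K1_B1 (u : H ⊗[k] (H ⊗[k] H)) (w : H4 k H) :
    K1 Q (w * B1 Q u) = K1 Q (w * j12 (e3 Q u)) := by
  refine ind4 (f := K1 Q ∘ₗ LinearMap.mulRight k (B1 Q u))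
    (g := K1 Q ∘ₗ LinearMap.mulRight k (j12 (e3 Q u))) (fun a b c d => ?_) w
  refine ind3 (f := K1 Q ∘ₗ LinearMap.mulLeft k (a ⊗ₜ[k] (b ⊗ₜ[k] (c ⊗ₜ[k] d))) ∘ₗ (B1 Q).toLinearMap)
    (g := K1 Q ∘ₗ LinearMap.mulLeft k (a ⊗ₜ[k] (b ⊗ₜ[k] (c ⊗ₜ[k] d))) ∘ₗ j12.toLinearMap ∘ₗ
      (e3 Q).toLinearMap) (fun u1 u2 u3 => ?_) u
  have : ∀ z, K1 Q (a ⊗ₜ (b ⊗ₜ (c ⊗ₜ d)) * u1 ⊗ₜ (u2 ⊗ₜ z)) =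
     (a * u1) ⊗ₜ (Q.S (b * u2) * Q.alpha * (c * be Q z * Q.S d)) := by
    intro z
    induction z using TensorProduct.induction_on with
    | zero => simp
    | tmul x y => simp [Q.S_mul, mul_assoc]
    | add x y hx hy => simp only [map_add, hx, hy, tmul_add, add_mul, mul_add]
  simp only [LinearMap.comp_apply, AlgHom.toLinearMap_apply, LinearMap.mulLeft_apply,
    LinearMap.mulRight_apply, B1_tmul, this]
  simp [be_comul, mul_assoc]

lemma P1 : K1 Q (A3 Q.Phi * B2 Q Q.PhiInv) = 1 := by
  rw [(pent3 Q).1, mas4, K1_A2, e2_PhiInv, map_one, one4, K1_B1, e3_Phi, map_one, four1,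
    A1_apply]
  simp [K1, kap_PhiInv, Algebra.TensorProduct.one_def]

lemma K4_B1 (u : H ⊗[k] (H ⊗[k] H)) (w : H4 k H) :
    K4 Q (B1 Q u * w) = K4 Q (j12 (e3 Q u) * w) := by
  refine ind4 (f := K4 Q ∘ₗ LinearMap.mulLeft k (B1 Q u))
    (g := K4 Q ∘ₗ LinearMap.mulLeft k (j12 (e3 Q u))) (fun a b c d => ?_) w
  refine ind3 (f := K4 Q ∘ₗ LinearMap.mulRight k (a ⊗ₜ[k] (b ⊗ₜ[k] (c ⊗ₜ[k] d))) ∘ₗ (B1 Q).toLinearMap)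
    (g := K4 Q ∘ₗ LinearMap.mulRight k (a ⊗ₜ[k] (b ⊗ₜ[k] (c ⊗ₜ[k] d))) ∘ₗ j12.toLinearMap ∘ₗ
      (e3 Q).toLinearMap) (fun u1 u2 u3 => ?_) u
  have : ∀ z, K4 Q (u1 ⊗ₜ (u2 ⊗ₜ z) * a ⊗ₜ (b ⊗ₜ (c ⊗ₜ d))) =
     (u1 * a) ⊗ₜ (u2 * b * Q.beta * (Q.S c * al Q z * d)) := by
    intro z
    induction z using TensorProduct.induction_on with
    | zero => simp
    | tmul x y => simp [Q.S_mul, mul_assoc]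
    | add x y hx hy => simp only [map_add, hx, hy, tmul_add, add_mul, mul_add]
  simp only [LinearMap.comp_apply, AlgHom.toLinearMap_apply, LinearMap.mulLeft_apply,
    LinearMap.mulRight_apply, B1_tmul, this]
  simp [al_comul, mul_assoc]

lemma K4_A2 (u : H ⊗[k] (H ⊗[k] H)) (w : H4 k H) :
    K4 Q (w * A2 Q u) = K4 Q (w * j14 (e2 Q u)) := by
  refine ind4 (f := K4 Q ∘ₗ LinearMap.mulRight k (A2 Q u))
    (g := K4 Q ∘ₗ LinearMap.mulRight k (j14 (e2 Q u))) (fun a b c d => ?_) w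
  refine ind3 (f := K4 Q ∘ₗ LinearMap.mulLeft k (a ⊗ₜ[k] (b ⊗ₜ[k] (c ⊗ₜ[k] d))) ∘ₗ (A2 Q).toLinearMap)
    (g := K4 Q ∘ₗ LinearMap.mulLeft k (a ⊗ₜ[k] (b ⊗ₜ[k] (c ⊗ₜ[k] d))) ∘ₗ j14.toLinearMap ∘ₗ
      (e2 Q).toLinearMap) (fun u1 u2 u3 => ?_) u
  have : ∀ z, K4 Q (a ⊗ₜ (b ⊗ₜ (c ⊗ₜ d)) * a22 u1 u3 z) =
     (a * u1) ⊗ₜ (b * be Q z * (Q.S c * Q.alpha * (d * u3))) := by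
    intro z
    induction z using TensorProduct.induction_on with
    | zero => simp
    | tmul x y => simp [Q.S_mul, mul_assoc]
    | add x y hx hy => simp only [map_add, hx, hy, tmul_add, add_mul, mul_add]
  simp only [LinearMap.comp_apply, AlgHom.toLinearMap_apply, LinearMap.mulLeft_apply,
    LinearMap.mulRight_apply, A2_tmul, this]
  simp [be_comul, mul_assoc]

lemma P4 : K4 Q (B2 Q Q.Phi * A3 Q.PhiInv) = 1 := by
  rw [(pent3 Q).2.1, mas4, K4_B1, e3_PhiInv, map_one, one4, K4_A2, e2_Phi, map_one, four1,
    A1_apply]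
  simp [K4, kap'_Phi, Algebra.TensorProduct.one_def]

lemma K5_A2 (u : H ⊗[k] (H ⊗[k] H)) (w : H4 k H) :
    K5 Q (A2 Q u * w) = K5 Q (j14 (e2 Q u) * w) := by
  refine ind4 (f := K5 Q ∘ₗ LinearMap.mulLeft k (A2 Q u))
    (g := K5 Q ∘ₗ LinearMap.mulLeft k (j14 (e2 Q u))) (fun a b c d => ?_) w
  refine ind3 (f := K5 Q ∘ₗ LinearMap.mulRight k (a ⊗ₜ[k] (b ⊗ₜ[k] (c ⊗ₜ[k] d))) ∘ₗ (A2 Q).toLinearMap)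
    (g := K5 Q ∘ₗ LinearMap.mulRight k (a ⊗ₜ[k] (b ⊗ₜ[k] (c ⊗ₜ[k] d))) ∘ₗ j14.toLinearMap ∘ₗ
      (e2 Q).toLinearMap) (fun u1 u2 u3 => ?_) u
  have : ∀ z, K5 Q (a22 u1 u3 z * a ⊗ₜ (b ⊗ₜ (c ⊗ₜ d))) =
     (u1 * a * Q.beta * (Q.S b * al Q z * c)) ⊗ₜ (u3 * d) := by
    intro z
    induction z using TensorProduct.induction_on with
    | zero => simp
    | tmul x y => simp [Q.S_mul, mul_assoc]
    | add x y hx hy => simp only [map_add, hx, hy, add_tmul, add_mul, mul_add]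
  simp only [LinearMap.comp_apply, AlgHom.toLinearMap_apply, LinearMap.mulLeft_apply,
    LinearMap.mulRight_apply, A2_tmul, this]
  simp [al_comul, mul_assoc, smul_tmul']

lemma K5_B2 (u : H ⊗[k] (H ⊗[k] H)) (w : H4 k H) :
    K5 Q (w * B2 Q u) = K5 Q (w * j34 (e1 Q u)) := by
  refine ind4 (f := K5 Q ∘ₗ LinearMap.mulRight k (B2 Q u))
    (g := K5 Q ∘ₗ LinearMap.mulRight k (j34 (e1 Q u))) (fun a b c d => ?_) w
  refine ind3 (f := K5 Q ∘ₗ LinearMap.mulLeft k (a ⊗ₜ[k] (b ⊗ₜ[k] (c ⊗ₜ[k] d))) ∘ₗ (B2 Q).toLinearMap)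
    (g := K5 Q ∘ₗ LinearMap.mulLeft k (a ⊗ₜ[k] (b ⊗ₜ[k] (c ⊗ₜ[k] d))) ∘ₗ j34.toLinearMap ∘ₗ
      (e1 Q).toLinearMap) (fun u1 u2 u3 => ?_) u
  have : ∀ z, K5 Q (a ⊗ₜ (b ⊗ₜ (c ⊗ₜ d)) * TensorProduct.assoc k H H (H ⊗[k] H)
      (z ⊗ₜ (u2 ⊗ₜ u3))) =
     (a * be Q z * (Q.S b * Q.alpha * (c * u2))) ⊗ₜ (d * u3) := by
    intro z
    induction z using TensorProduct.induction_on with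
    | zero => simp
    | tmul x y => simp [Q.S_mul, mul_assoc]
    | add x y hx hy => simp only [map_add, hx, hy, add_tmul, add_mul, mul_add]
  simp only [LinearMap.comp_apply, AlgHom.toLinearMap_apply, LinearMap.mulLeft_apply,
    LinearMap.mulRight_apply, B2_tmul, this]
  simp [be_comul, mul_assoc, smul_tmul']

lemma P5 : K5 Q (A1 Q.PhiInv * B1 Q Q.Phi) = 1 := by
  rw [(pent3 Q).2.2, mas4, K5_A2, e2_Phi, map_one, one4, K5_B2, e1_PhiInv, map_one, four1]
  have : ∀ u : H ⊗[k] (H ⊗[k] H), K5 Q (A3 u) = kap' Q u ⊗ₜ 1 := fun u =>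
    ind3 (f := K5 Q ∘ₗ A3.toLinearMap) (g := (TensorProduct.mk k _ _).flip 1 ∘ₗ kap' Q)
      (fun a b c => by simp [A3_tmul]) u
  simp [this, kap'_Phi, Algebra.TensorProduct.one_def]

end
section
set_option maxSynthPendingDepth 6
set_option linter.unusedSimpArgs false
variable {k H B : Type*} [Field k] [Ring H] [Algebra k H] [Ring B] [Algebra k B]
  (Q : QuasiHopfAlgebra k H) (R : RightComoduleAlgebra Q.toQuasiBialgebra B) (v : H →ₐ[k] B)

noncomputable def tm : B ⊗[k] H →ₗ[k] B :=
  LinearMap.mul' k B ∘ₗ TensorProduct.map LinearMap.id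
    (v.toLinearMap ∘ₗ LinearMap.mulLeft k Q.beta ∘ₗ Q.S)
@[simp] lemma tm_tmul (b : B) (h : H) : tm Q v (b ⊗ₜ h) = b * v (Q.beta * Q.S h) := by simp [tm]

noncomputable def T : B →ₗ[k] B := tm Q v ∘ₗ R.coact.toLinearMap
lemma T_apply (b : B) : T Q R v b = tm Q v (R.coact b) := rfl

noncomputable def N (t : B) : H ⊗[k] H →ₗ[k] B :=
  LinearMap.mul' k B ∘ₗ TensorProduct.map (LinearMap.mulRight k t ∘ₗ v.toLinearMap) v.toLinearMap
@[simp] lemma N_tmul (t : B) (a b : H) : N (k := k) v t (a ⊗ₜ b) = v a * t * v b := by simp [N]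

noncomputable def NS (t : B) : H ⊗[k] H →ₗ[k] B :=
  LinearMap.mul' k B ∘ₗ TensorProduct.map (LinearMap.mulRight k t ∘ₗ v.toLinearMap)
    (v.toLinearMap ∘ₗ Q.S)
@[simp] lemma NS_tmul (t : B) (a b : H) : NS Q v t (a ⊗ₜ b) = v a * t * v (Q.S b) := by simp [NS]

noncomputable def K0 : H ⊗[k] (H ⊗[k] H) →ₗ[k] H ⊗[k] H := TensorProduct.map LinearMap.id (al Q)
@[simp] lemma K0_tmul (a b c : H) : K0 Q (a ⊗ₜ (b ⊗ₜ c)) = a ⊗ₜ (Q.S b * Q.alpha * c) := by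
  simp [K0]

/-- `v ⊗ id` -/
noncomputable def V2 : H ⊗[k] H →ₐ[k] B ⊗[k] H := Algebra.TensorProduct.map v (AlgHom.id k H)
@[simp] lemma V2_tmul (a b : H) : V2 (k := k) v (a ⊗ₜ b) = v a ⊗ₜ b := by simp [V2]

lemma tm_mul (x : B ⊗[k] H) (h : H) : tm Q v (x * V2 v (Q.comul h)) = Q.counit h • tm Q v x := by
  refine ind2 (f := tm Q v ∘ₗ LinearMap.mulRight k (V2 v (Q.comul h)))
    (g := Q.counit h • tm Q v) (fun b g => ?_) x
  have : ∀ w, tm Q v (b ⊗ₜ g * V2 v w) = b * v (be Q w) * v (Q.S g) := by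
    intro w
    induction w using TensorProduct.induction_on with
    | zero => simp
    | tmul x y => simp [Q.S_mul, mul_assoc]
    | add x y hx hy => simp only [map_add, hx, hy, add_mul, mul_add]
  simp only [LinearMap.comp_apply, LinearMap.mulRight_apply, this, be_comul]
  simp [mul_assoc]

lemma tm_mul_left (x y : B ⊗[k] H) :
    ∀ b h, x = b ⊗ₜ h → tm Q v (x * y) = b * tm Q v y * v (Q.S h) := by
  rintro b h rfl
  refine ind2 (f := tm Q v ∘ₗ LinearMap.mulLeft k (b ⊗ₜ[k] h))
    (g := LinearMap.mulRight k (v (Q.S h)) ∘ₗ LinearMap.mulLeft k b ∘ₗ tm Q v) (fun c g => ?_) y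
  simp [Q.S_mul, mul_assoc]


lemma T_mul_v (hv : IsComodAlgMorphismFromH R v) (b : B) (h : H) : T Q R v (b * v h) = Q.counit h • T Q R v b := by
  rw [T_apply, map_mul, hv.1]
  exact tm_mul Q v _ _

lemma T_v_mul (hv : IsComodAlgMorphismFromH R v) (b : B) (h : H) : T Q R v (v h * b) = NS Q v (T Q R v b) (Q.comul h) := by
  rw [T_apply, map_mul, hv.1]
  refine ind2 (f := tm Q v ∘ₗ LinearMap.mulRight k (R.coact b) ∘ₗ (V2 v).toLinearMap)
    (g := NS Q v (T Q R v b)) (fun c g => ?_) (Q.comul h)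
  simp only [LinearMap.comp_apply, LinearMap.mulRight_apply, AlgHom.toLinearMap_apply, V2_tmul]
  rw [tm_mul_left Q v _ _ _ _ rfl]
  simp [T_apply]

lemma E_eq (E : B →ₗ[k] B) (hE : IsCanonicalProjection Q R v E) (b : B) :
    E b = N v (T Q R v b) (K0 Q Q.Phi) := by
  obtain ⟨n, X1, X2, X3, e⟩ := exists_rep3 Q.Phi
  obtain ⟨p, b0, b1, e'⟩ := exists_rep (R.coact b)
  rw [hE b n X1 X2 X3 e p b0 b1 e', T_apply, e, e']
  simp [Finset.mul_sum, Finset.sum_mul, Q.S_mul, Q.S_Sinv, mul_assoc]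

lemma T_one : T Q R v 1 = v Q.beta := by
  rw [T_apply, map_one, Algebra.TensorProduct.one_def, tm_tmul, Q.S_one]; simp

lemma E_one (E : B →ₗ[k] B) (hE : IsCanonicalProjection Q R v E) : E 1 = 1 := by
  rw [E_eq Q R v E hE, T_one]
  have := ind3 (f := N v (v Q.beta) ∘ₗ K0 Q) (g := v.toLinearMap ∘ₗ kap' Q)
    (fun a b c => by simp [mul_assoc]) Q.Phi
  simpa [kap'_Phi] using this

lemma T_tm (hv : IsComodAlgMorphismFromH R v) (b : B) : T Q R v (T Q R v b) = T Q R v b := by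
  rw [T_apply Q R v b]
  have := ind2 (f := T Q R v ∘ₗ tm Q v) (g := T Q R v ∘ₗ
    (Algebra.TensorProduct.rid k k B).toLinearMap ∘ₗ
    (Algebra.TensorProduct.map (AlgHom.id k B) Q.counit).toLinearMap) (fun c h => by
      simp [T_mul_v Q R v hv, Q.counit_beta, counit_S, -map_mul, mul_comm]
      simp [Q.counit_beta, counit_S])
    (R.coact b)
  simp only [LinearMap.comp_apply, AlgHom.toLinearMap_apply, R.counit_coact b] at this
  rw [this]
  simp [T_apply]

lemma T_E (hv : IsComodAlgMorphismFromH R v) (E : B →ₗ[k] B) (hE : IsCanonicalProjection Q R v E) (b : B) :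
    T Q R v (E b) = T Q R v b := by
  rw [E_eq Q R v E hE]
  conv_rhs => rw [← T_tm Q R v hv b]
  generalize T Q R v b = t
  have := ind3 (f := T Q R v ∘ₗ N v t ∘ₗ K0 Q) (g := T Q R v ∘ₗ LinearMap.mulRight k t ∘ₗ
     v.toLinearMap ∘ₗ (Algebra.TensorProduct.rid k k H).toLinearMap ∘ₗ
    (Algebra.TensorProduct.map (AlgHom.id k H) Q.counit).toLinearMap ∘ₗ (e2 Q).toLinearMap)
    (fun c h h' => by
      simp only [LinearMap.comp_apply, K0_tmul, N_tmul, T_mul_v Q R v hv]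
      simp [Q.counit_alpha, counit_S, mul_smul]) Q.Phi
  simp only [LinearMap.comp_apply, AlgHom.toLinearMap_apply, e2_Phi] at this
  rw [this]
  simp

lemma E_eq_of_T (E : B →ₗ[k] B) (hE : IsCanonicalProjection Q R v E) (b c : B)
    (h : T Q R v b = T Q R v c) : E b = E c := by
  rw [E_eq Q R v E hE, h, ← E_eq Q R v E hE]

lemma E_E (hv : IsComodAlgMorphismFromH R v) (E : B →ₗ[k] B) (hE : IsCanonicalProjection Q R v E) (b : B) : E (E b) = E b :=
  E_eq_of_T Q R v E hE _ _ (T_E Q R v hv E hE b)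

lemma theta_lin (hv : IsComodAlgMorphismFromH R v) (E : B →ₗ[k] B) (hE : IsCanonicalProjection Q R v E) (b : B) (p1 p2 p3 : H) :
    E (v p1 * b) * v (p2 * Q.beta * Q.S p3) =
      N v (T Q R v b) (K1 Q (A3 Q.Phi * B2 Q (p1 ⊗ₜ (p2 ⊗ₜ p3)))) := by
  rw [E_eq Q R v E hE, T_v_mul Q R v hv]
  generalize T Q R v b = t
  rw [B2_tmul]
  generalize Q.comul p1 = w
  refine ind3 (f := LinearMap.mulRight k (v (p2 * Q.beta * Q.S p3)) ∘ₗ N v (NS Q v t w) ∘ₗ K0 Q)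
    (g := N v t ∘ₗ K1 Q ∘ₗ LinearMap.mulRight k
      (TensorProduct.assoc k H H (H ⊗[k] H) (w ⊗ₜ (p2 ⊗ₜ p3))) ∘ₗ A3.toLinearMap)
    (fun a b c => ?_) Q.Phi
  simp only [LinearMap.comp_apply, LinearMap.mulRight_apply, K0_tmul, N_tmul,
    AlgHom.toLinearMap_apply, A3_tmul]
  induction w using TensorProduct.induction_on with
    | zero => simp
    | tmul x y => simp [Q.S_mul, mul_assoc]
    | add x y hx hy => simp only [map_add, hx, hy, add_mul, mul_add, add_tmul]

lemma theta_eq (hv : IsComodAlgMorphismFromH R v) (E : B →ₗ[k] B) (hE : IsCanonicalProjection Q R v E) (theta : B → B)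
    (htheta : ∀ (b : B) (n : ℕ) (p1 p2 p3 : Fin n → H),
      Q.PhiInv = ∑ i, p1 i ⊗ₜ[k] (p2 i ⊗ₜ[k] p3 i) →
      theta b = ∑ i, E (v (p1 i) * b) * v (p2 i * Q.beta * Q.S (p3 i))) (b : B) :
    theta b = T Q R v b := by
  obtain ⟨n, X1, X2, X3, e⟩ := exists_rep3 Q.PhiInv
  rw [htheta b n X1 X2 X3 e]
  simp only [theta_lin Q R v hv E hE]
  rw [← map_sum, ← map_sum, ← Finset.mul_sum, ← map_sum, ← e, P1, Algebra.TensorProduct.one_def]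
  simp

end
section
set_option maxSynthPendingDepth 6
set_option linter.unusedSimpArgs false
variable {k H B : Type*} [Field k] [Ring H] [Algebra k H] [Ring B] [Algebra k B]
  (Q : QuasiHopfAlgebra k H) (R : RightComoduleAlgebra Q.toQuasiBialgebra B) (v : H →ₐ[k] B)

abbrev B4 (k H B : Type*) [Field k] [Ring H] [Algebra k H] [Ring B] [Algebra k B] :=
  B ⊗[k] (H ⊗[k] (H ⊗[k] H))

noncomputable def V3 : H ⊗[k] (H ⊗[k] H) →ₐ[k] B ⊗[k] (H ⊗[k] H) :=
  Algebra.TensorProduct.map v (AlgHom.id k (H ⊗[k] H))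
noncomputable def V4 : H4 k H →ₐ[k] B4 k H B :=
  Algebra.TensorProduct.map v (AlgHom.id k (H ⊗[k] (H ⊗[k] H)))
noncomputable def A3B : B ⊗[k] (H ⊗[k] H) →ₐ[k] B4 k H B :=
  Algebra.TensorProduct.map (AlgHom.id k B)
          (Algebra.TensorProduct.map (AlgHom.id k H)
            (Algebra.TensorProduct.includeLeft : H →ₐ[k] H ⊗[k] H))
noncomputable def B1B : B ⊗[k] (H ⊗[k] H) →ₐ[k] B4 k H B :=
  Algebra.TensorProduct.map (AlgHom.id k B)
          (Algebra.TensorProduct.map (AlgHom.id k H) Q.comul)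
@[simp] lemma V3_tmul (a : H) (w : H ⊗[k] H) : V3 (k := k) v (a ⊗ₜ w) = v a ⊗ₜ w := by simp [V3]
@[simp] lemma V4_tmul (a : H) (w : H ⊗[k] (H ⊗[k] H)) :
  V4 (k := k) v (a ⊗ₜ w) = v a ⊗ₜ w := by simp [V4]
@[simp] lemma A3B_tmul (a : B) (b c : H) :
  A3B (k := k) (a ⊗ₜ (b ⊗ₜ c)) = a ⊗ₜ (b ⊗ₜ (c ⊗ₜ 1)) := by simp [A3B]
@[simp] lemma B1B_tmul (a : B) (b c : H) :
  B1B Q (a ⊗ₜ (b ⊗ₜ c)) = a ⊗ₜ (b ⊗ₜ Q.comul c) := by simp [B1B]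

lemma A3B_V3 (u : H ⊗[k] (H ⊗[k] H)) : A3B (V3 v u) = V4 v (A3 u) :=
  ind3 (f := A3B.toLinearMap ∘ₗ (V3 v).toLinearMap) (g := (V4 v).toLinearMap ∘ₗ A3.toLinearMap)
    (fun a b c => by simp [A3_tmul]) u
lemma B1B_V3 (u : H ⊗[k] (H ⊗[k] H)) : B1B Q (V3 v u) = V4 v (B1 Q u) :=
  ind3 (f := (B1B Q).toLinearMap ∘ₗ (V3 v).toLinearMap)
    (g := (V4 v).toLinearMap ∘ₗ (B1 Q).toLinearMap)
    (fun a b c => by simp [B1_tmul]) u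

noncomputable def M : B ⊗[k] H →ₗ[k] B ⊗[k] H := TensorProduct.map (T Q R v) LinearMap.id
@[simp] lemma M_tmul (b : B) (h : H) : M Q R v (b ⊗ₜ h) = T Q R v b ⊗ₜ h := by simp [M]

noncomputable def J : B4 k H B →ₗ[k] B ⊗[k] H := TensorProduct.map (T Q R v) (kap' Q)
@[simp] lemma J_tmul (b : B) (c d e : H) : J Q R v (b ⊗ₜ (c ⊗ₜ (d ⊗ₜ e))) =
    T Q R v b ⊗ₜ (c * Q.beta * (Q.S d * Q.alpha * e)) := by simp [J]

/-- `(ρ ⊗ id) ρ(b)` reassociated -/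
noncomputable def rr : B ⊗[k] H →ₐ[k] B ⊗[k] (H ⊗[k] H) :=
  (Algebra.TensorProduct.assoc k k k B H H).toAlgHom.comp
    (Algebra.TensorProduct.map R.coact (AlgHom.id k H))
lemma rr_tmul (b : B) (h : H) : rr Q R (b ⊗ₜ h) =
   TensorProduct.assoc k B H H (R.coact b ⊗ₜ h) := by
  simp [rr]; rfl

noncomputable def dd : B ⊗[k] H →ₐ[k] B ⊗[k] (H ⊗[k] H) :=
  Algebra.TensorProduct.map (AlgHom.id k B) Q.comul
lemma dd_tmul (b : B) (h : H) : dd Q (b ⊗ₜ h) = b ⊗ₜ (Q.comul h) := by simp [dd]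

noncomputable def rB : B ⊗[k] H →ₗ[k] B := (Algebra.TensorProduct.rid k k B).toLinearMap ∘ₗ
    (Algebra.TensorProduct.map (AlgHom.id k B) Q.counit).toLinearMap
@[simp] lemma rB_tmul (b : B) (h : H) : rB Q (b ⊗ₜ h) = Q.counit h • b := by simp [rB]
lemma rB_coact (b : B) : rB Q (R.coact b) = b := by
  change Algebra.TensorProduct.rid k k B
    (Algebra.TensorProduct.map (AlgHom.id k B) Q.counit (R.coact b)) = b
  rw [R.counit_coact]
  simp

/-- `c ⊗ d ↦ 1 ⊗ c ⊗ d ⊗ 1` -/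
noncomputable def j23 : H ⊗[k] H →ₐ[k] B4 k H B :=
  (Algebra.TensorProduct.includeRight : H ⊗[k] (H ⊗[k] H) →ₐ[k] B4 k H B).comp
    (Algebra.TensorProduct.map (AlgHom.id k H)
            (Algebra.TensorProduct.includeLeft : H →ₐ[k] H ⊗[k] H))
@[simp] lemma j23_tmul (a b : H) : j23 (k := k) (B := B) (a ⊗ₜ b) = 1 ⊗ₜ (a ⊗ₜ (b ⊗ₜ 1)) := by
  simp [j23]


lemma M_mul (hv : IsComodAlgMorphismFromH R v) (x : B ⊗[k] H) (h : H) : M Q R v (x * V2 v (Q.comul h)) = M Q R v x * 1 ⊗ₜ h := by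
  refine ind2 (f := M Q R v ∘ₗ LinearMap.mulRight k (V2 v (Q.comul h)))
    (g := LinearMap.mulRight k (1 ⊗ₜ[k] h) ∘ₗ M Q R v) (fun b g => ?_) x
  have : ∀ w, M Q R v (b ⊗ₜ g * V2 v w) = T Q R v b ⊗ₜ (g * Algebra.TensorProduct.lid k H
    (Algebra.TensorProduct.map Q.counit (AlgHom.id k H) w)) := by
    intro w
    induction w using TensorProduct.induction_on with
    | zero => simp
    | tmul x y =>
      simp only [V2_tmul, Algebra.TensorProduct.tmul_mul_tmul, M_tmul, T_mul_v Q R v hv]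
      simp [smul_tmul']
    | add x y hx hy => simp only [map_add, hx, hy, add_mul, mul_add, tmul_add]
  simp only [LinearMap.comp_apply, LinearMap.mulRight_apply, this, cl]
  simp

lemma MN (hv : IsComodAlgMorphismFromH R v) (x : B ⊗[k] H) (u : H ⊗[k] (H ⊗[k] H)) :
    M Q R v (R.coact (N v (tm Q v x) (K0 Q u))) = J Q R v (V4 v (B2 Q u) * A3B (rr Q R x)) := by
  refine ind3 (f := M Q R v ∘ₗ R.coact.toLinearMap ∘ₗ N v (tm Q v x) ∘ₗ K0 Q)
    (g := J Q R v ∘ₗ LinearMap.mulRight k (A3B (rr Q R x)) ∘ₗ (V4 v).toLinearMap ∘ₗ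
       (B2 Q).toLinearMap) (fun u1 u2 u3 => ?_) u
  have key := ind2 (f := M Q R v ∘ₗ R.coact.toLinearMap ∘ₗ LinearMap.mulRight k
       (v (Q.S u2 * Q.alpha * u3)) ∘ₗ LinearMap.mulLeft k (v u1) ∘ₗ tm Q v)
    (g := J Q R v ∘ₗ LinearMap.mulLeft k (V4 v (B2 Q (u1 ⊗ₜ (u2 ⊗ₜ u3)))) ∘ₗ A3B.toLinearMap ∘ₗ
      (rr Q R).toLinearMap) (fun b g => ?_) x
  · simpa [mul_assoc] using key
  · simp only [LinearMap.comp_apply, AlgHom.toLinearMap_apply, LinearMap.mulRight_apply,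
      LinearMap.mulLeft_apply, tm_tmul, B2_tmul, rr_tmul]
    rw [← mul_assoc, mul_assoc, ← map_mul v, map_mul R.coact, map_mul R.coact, hv.1, hv.1]
    refine (M_mul Q R v hv _ _).trans ?_
    change M Q R v (V2 v _ * _) * _ = _
    generalize R.coact b = y
    generalize Q.comul u1 = w
    induction w using TensorProduct.induction_on with
    | zero => simp
    | add x y hx hy => simp only [map_add, hx, hy, add_mul, mul_add, tmul_add, add_tmul]
    | tmul p q =>
    induction y using TensorProduct.induction_on with
    | zero => simp
    | add x y hx hy => simp only [map_add, hx, hy, add_mul, mul_add, tmul_add, add_tmul]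
    | tmul c r => simp [Q.S_mul, mul_assoc]

lemma J_A3 (hv : IsComodAlgMorphismFromH R v) (u : H ⊗[k] (H ⊗[k] H)) (m : B4 k H B) :
    J Q R v (m * V4 v (A3 u)) = J Q R v (m * j23 (e1 Q u)) := by
  refine ind4 (f := J Q R v ∘ₗ LinearMap.mulRight k (V4 v (A3 u)))
    (g := J Q R v ∘ₗ LinearMap.mulRight k (j23 (e1 Q u))) (fun a b c d => ?_) m
  refine ind3 (f := J Q R v ∘ₗ LinearMap.mulLeft k (a ⊗ₜ[k] (b ⊗ₜ[k] (c ⊗ₜ[k] d))) ∘ₗ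
      (V4 v).toLinearMap ∘ₗ A3.toLinearMap)
    (g := J Q R v ∘ₗ LinearMap.mulLeft k (a ⊗ₜ[k] (b ⊗ₜ[k] (c ⊗ₜ[k] d))) ∘ₗ
      j23.toLinearMap ∘ₗ (e1 Q).toLinearMap) (fun u1 u2 u3 => ?_) u
  simp [A3_tmul, T_mul_v Q R v hv, smul_tmul']

lemma J_dd (x : B ⊗[k] H) (m : B4 k H B) :
    J Q R v (m * A3B (dd Q x)) = J Q R v (m * rB Q x ⊗ₜ 1) := by
  refine ind4 (f := J Q R v ∘ₗ LinearMap.mulRight k (A3B (dd Q x)))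
    (g := J Q R v ∘ₗ LinearMap.mulRight k (rB Q x ⊗ₜ 1)) (fun a b c d => ?_) m
  refine ind2 (f := J Q R v ∘ₗ LinearMap.mulLeft k (a ⊗ₜ[k] (b ⊗ₜ[k] (c ⊗ₜ[k] d))) ∘ₗ
      A3B.toLinearMap ∘ₗ (dd Q).toLinearMap)
    (g := J Q R v ∘ₗ LinearMap.mulLeft k (a ⊗ₜ[k] (b ⊗ₜ[k] (c ⊗ₜ[k] d))) ∘ₗ
      (TensorProduct.mk k _ _).flip 1 ∘ₗ rB Q) (fun e g => ?_) x
  have : ∀ w, J Q R v ((a ⊗ₜ[k] (b ⊗ₜ[k] (c ⊗ₜ[k] d))) * A3B (e ⊗ₜ w)) =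
      T Q R v (a * e) ⊗ₜ (b * be Q w * (Q.S c * Q.alpha * d)) := by
    intro w
    induction w using TensorProduct.induction_on with
    | zero => simp
    | tmul x y => simp [Q.S_mul, mul_assoc]
    | add x y hx hy => simp only [map_add, hx, hy, add_mul, mul_add, tmul_add]
  simp only [LinearMap.comp_apply, AlgHom.toLinearMap_apply, LinearMap.mulRight_apply,
      LinearMap.mulLeft_apply, dd_tmul, this, be_comul]
  simp [smul_tmul', mul_assoc]

lemma PhiRhoInv_eq (hv : IsComodAlgMorphismFromH R v) : R.PhiRhoInv = V3 v Q.PhiInv := by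
  have h : R.PhiRho = V3 v Q.Phi := hv.2
  have h1 := R.inv_mul_PhiRho
  have h2 := (hom_inv Q (V3 (k := k) v)).1
  rw [h] at h1
  exact left_inv_eq_right_inv h1 h2

lemma rr_coact (hv : IsComodAlgMorphismFromH R v) (a : B) : V3 v Q.Phi * rr Q R (R.coact a) = dd Q (R.coact a) * V3 v Q.Phi := by
  have h : R.PhiRho = V3 v Q.Phi := hv.2
  rw [← h]
  exact R.coact_coassoc a

lemma rr_coact' (hv : IsComodAlgMorphismFromH R v) (a : B) : rr Q R (R.coact a) =
    V3 v Q.PhiInv * dd Q (R.coact a) * V3 v Q.Phi := by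
  rw [mul_assoc, ← rr_coact Q R v hv, ← mul_assoc, (hom_inv Q (V3 (k := k) v)).2, one_mul]

lemma M_coact_E (hv : IsComodAlgMorphismFromH R v) (E : B →ₗ[k] B) (hE : IsCanonicalProjection Q R v E) (a : B) :
    M Q R v (R.coact (E a)) = T Q R v a ⊗ₜ 1 := by
  rw [E_eq Q R v E hE, T_apply, MN Q R v hv, rr_coact' Q R v hv, map_mul (A3B (k := k)),
    map_mul (A3B (k := k)), A3B_V3, A3B_V3,
    ← mul_assoc, J_A3 Q R v hv, e1_Phi, map_one, mul_one, ← mul_assoc, ← map_mul (V4 v), J_dd,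
    rB_coact]
  have : ∀ z : H4 k H, J Q R v (V4 v z * a ⊗ₜ 1) =
      TensorProduct.map (T Q R v ∘ₗ LinearMap.mulRight k a ∘ₗ v.toLinearMap) LinearMap.id (K4 Q z) := by
    intro z
    refine ind4 (f := J Q R v ∘ₗ LinearMap.mulRight k (a ⊗ₜ 1) ∘ₗ (V4 v).toLinearMap)
      (g := TensorProduct.map (T Q R v ∘ₗ LinearMap.mulRight k a ∘ₗ v.toLinearMap) LinearMap.id ∘ₗ
        K4 Q) (fun b c d e => ?_) z
    simp
  rw [this, P4, Algebra.TensorProduct.one_def]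
  simp [T_apply]

end
section
set_option maxSynthPendingDepth 6
set_option linter.unusedSimpArgs false
variable {k H B : Type*} [Field k] [Ring H] [Algebra k H] [Ring B] [Algebra k B]
  (Q : QuasiHopfAlgebra k H) (R : RightComoduleAlgebra Q.toQuasiBialgebra B) (v : H →ₐ[k] B)

noncomputable def W (t : B) : H ⊗[k] (H ⊗[k] H) →ₗ[k] B :=
  LinearMap.mul' k B ∘ₗ TensorProduct.map
    (v.toLinearMap ∘ₗ LinearMap.mulRight k Q.alpha ∘ₗ Q.S) (NS Q v t)
@[simp] lemma W_tmul (t : B) (a : H) (w : H ⊗[k] H) :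
    W Q v t (a ⊗ₜ w) = v (Q.S a * Q.alpha) * NS Q v t w := by simp [W]

noncomputable def Lam (t : B) : B4 k H B →ₗ[k] B :=
  LinearMap.mul' k B ∘ₗ TensorProduct.map (LinearMap.mulRight k (v Q.beta)) (W Q v t)
@[simp] lemma Lam_tmul (t : B) (b : B) (w : H ⊗[k] (H ⊗[k] H)) :
    Lam Q v t (b ⊗ₜ w) = b * v Q.beta * W Q v t w := by simp [Lam]

noncomputable def Lam2 (t : B) : B ⊗[k] H4 k H →ₗ[k] B :=
  LinearMap.mul' k B ∘ₗ TensorProduct.map v.toLinearMap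
    (LinearMap.mul' k B ∘ₗ TensorProduct.map LinearMap.id (W Q v t)) ∘ₗ
    (TensorProduct.leftComm k B H (H ⊗[k] (H ⊗[k] H))).toLinearMap
@[simp] lemma Lam2_tmul (t c : B) (a : H) (w : H ⊗[k] (H ⊗[k] H)) :
    Lam2 Q v t (c ⊗ₜ (a ⊗ₜ w)) = v a * (c * W Q v t w) := by simp [Lam2]

/-- `h ↦ z (1 ⊗ 1 ⊗ Δ h)` -/
noncomputable def G (z : H4 k H) : H →ₗ[k] H4 k H :=
  LinearMap.mulLeft k z ∘ₗ (j34 (k := k)).toLinearMap ∘ₗ Q.comul.toLinearMap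
lemma G_apply (z : H4 k H) (h : H) : G Q z h = z * j34 (Q.comul h) := by simp [G]

lemma step5a (t : B) (z : H4 k H) (x : B ⊗[k] H) :
    Lam2 Q v t (TensorProduct.map LinearMap.id (G Q z) (M Q R v x)) =
      Lam Q v t (V4 v z * B1B Q (rr Q R x)) := by
  refine ind2 (f := Lam2 Q v t ∘ₗ TensorProduct.map LinearMap.id (G Q z) ∘ₗ M Q R v)
    (g := Lam Q v t ∘ₗ LinearMap.mulLeft k (V4 v z) ∘ₗ (B1B Q).toLinearMap ∘ₗ
      (rr Q R).toLinearMap) (fun b h => ?_) x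
  simp only [LinearMap.comp_apply, AlgHom.toLinearMap_apply, LinearMap.mulLeft_apply, M_tmul,
    rr_tmul, TensorProduct.map_tmul, LinearMap.id_apply, G_apply, T_apply]
  generalize R.coact b = y
  induction y using TensorProduct.induction_on with
  | zero => simp
  | add x y hx hy => simp only [map_add, hx, hy, add_mul, mul_add, tmul_add, add_tmul]
  | tmul c g =>
  simp only [TensorProduct.assoc_tmul, B1B_tmul, tm_tmul]
  generalize Q.comul h = w
  induction w using TensorProduct.induction_on with
  | zero => simp
  | add x y hx hy => simp only [map_add, hx, hy, add_mul, mul_add, tmul_add, add_tmul]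
  | tmul p q =>
  refine ind4 (f := Lam2 Q v t ∘ₗ TensorProduct.mk k _ _ (c * v (Q.beta * Q.S g)) ∘ₗ
      LinearMap.mulRight k (j34 (p ⊗ₜ q)))
    (g := Lam Q v t ∘ₗ LinearMap.mulRight k (c ⊗ₜ[k] (g ⊗ₜ[k] (p ⊗ₜ[k] q))) ∘ₗ (V4 v).toLinearMap)
    (fun z1 z2 z3 z4 => ?_) z
  simp [Q.S_mul, mul_assoc]

/-- `1 ⊗ u` -/
noncomputable def I3 : H ⊗[k] (H ⊗[k] H) →ₐ[k] B4 k H B := Algebra.TensorProduct.includeRight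
lemma I3_apply (u : H ⊗[k] (H ⊗[k] H)) : I3 (k := k) (B := B) u = 1 ⊗ₜ u := rfl
lemma V4_A1 (u : H ⊗[k] (H ⊗[k] H)) : V4 v (A1 u) = I3 (k := k) u := by
  rw [A1_apply, V4_tmul, map_one, I3_apply]

lemma coas (h : H) : Q.PhiInv * Algebra.TensorProduct.map (AlgHom.id k H) Q.comul (Q.comul h) =
    (Algebra.TensorProduct.assoc k k k H H H)
      (Algebra.TensorProduct.map Q.comul (AlgHom.id k H) (Q.comul h)) * Q.PhiInv := by
  rw [Q.comul_coassoc, ← mul_assoc, ← mul_assoc, Q.inv_mul_Phi, one_mul]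

/-- `b ⊗ h ↦ b ⊗ (Δ ⊗ id) Δ h` -/
lemma conj5 (b : B) (h : H) : V4 v (A1 Q.PhiInv) * B1B Q (dd Q (b ⊗ₜ h)) =
    b ⊗ₜ[k] ((Algebra.TensorProduct.assoc k k k H H H)
      (Algebra.TensorProduct.map Q.comul (AlgHom.id k H) (Q.comul h))) * V4 v (A1 Q.PhiInv) := by
  rw [V4_A1, I3_apply, dd_tmul, B1B, Algebra.TensorProduct.map_tmul,
    Algebra.TensorProduct.tmul_mul_tmul, Algebra.TensorProduct.tmul_mul_tmul, coas]
  simp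

lemma Lam_al (t : B) (b : B) (w : H ⊗[k] H) (m : B4 k H B) :
    Lam Q v t (b ⊗ₜ[k] ((Algebra.TensorProduct.assoc k k k H H H)
      (Algebra.TensorProduct.map Q.comul (AlgHom.id k H) w)) * m) =
    Lam Q v t (b ⊗ₜ[k] (1 ⊗ₜ[k] (1 ⊗ₜ[k] (Algebra.TensorProduct.lid k H
    (Algebra.TensorProduct.map Q.counit (AlgHom.id k H) w)))) * m) := by
  induction w using TensorProduct.induction_on with
  | zero => simp
  | add x y hx hy => simp only [map_add, hx, hy, add_mul, mul_add, tmul_add, add_tmul]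
  | tmul p q =>
  refine ind4 (f := Lam Q v t ∘ₗ LinearMap.mulLeft k (b ⊗ₜ[k]
      ((Algebra.TensorProduct.assoc k k k H H H)
      (Algebra.TensorProduct.map Q.comul (AlgHom.id k H) (p ⊗ₜ q)))))
    (g := Lam Q v t ∘ₗ LinearMap.mulLeft k (b ⊗ₜ[k] (1 ⊗ₜ[k] (1 ⊗ₜ[k]
      (Algebra.TensorProduct.lid k H
      (Algebra.TensorProduct.map Q.counit (AlgHom.id k H) (p ⊗ₜ q)))))))
    (fun z1 z2 z3 z4 => ?_) m
  have : ∀ w : H ⊗[k] H, Lam Q v t (b ⊗ₜ[k] ((Algebra.TensorProduct.assoc k k k H H H)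
      (w ⊗ₜ[k] q)) * (z1 ⊗ₜ (z2 ⊗ₜ (z3 ⊗ₜ z4)))) =
      b * z1 * v Q.beta * (v (Q.S z2) * v (al Q w) * v z3 * t * v (Q.S (q * z4))) := by
    intro w
    induction w using TensorProduct.induction_on with
    | zero => simp
    | add x y hx hy => simp only [map_add, hx, hy, add_mul, mul_add, tmul_add, add_tmul]
    | tmul p q => simp [Q.S_mul, mul_assoc]
  simp only [LinearMap.comp_apply, LinearMap.mulLeft_apply, Algebra.TensorProduct.map_tmul,
    AlgHom.id_apply, this, al_comul]
  simp [Q.S_mul, mul_assoc]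

lemma Lam_K5 (t : B) (b : B) (h : H) (z : H4 k H) :
    Lam Q v t (b ⊗ₜ[k] (1 ⊗ₜ[k] (1 ⊗ₜ[k] h)) * V4 v z) =
      b * NS Q v t (K5 Q z) * v (Q.S h) := by
  refine ind4 (f := Lam Q v t ∘ₗ LinearMap.mulLeft k (b ⊗ₜ[k] (1 ⊗ₜ[k] (1 ⊗ₜ[k] h))) ∘ₗ
      (V4 v).toLinearMap)
    (g := LinearMap.mulRight k (v (Q.S h)) ∘ₗ LinearMap.mulLeft k b ∘ₗ NS Q v t ∘ₗ K5 Q)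
    (fun z1 z2 z3 z4 => ?_) z
  simp [Q.S_mul, mul_assoc]


lemma step5b (hv : IsComodAlgMorphismFromH R v) (a b' : B) :
    Lam Q v (T Q R v b') (V4 v (A1 Q.PhiInv * B1 Q Q.Phi) * B1B Q (rr Q R (R.coact a))) =
      T Q R v (a * b') := by
  rw [map_mul (V4 v), mul_assoc, ← B1B_V3, ← map_mul (B1B Q), rr_coact Q R v hv,
    map_mul (B1B Q), B1B_V3, ← mul_assoc, T_apply Q R v (a * b'), map_mul R.coact]
  refine ind2 (f := Lam Q v (T Q R v b') ∘ₗ LinearMap.mulRight k (V4 v (B1 Q Q.Phi)) ∘ₗ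
      LinearMap.mulLeft k (V4 v (A1 Q.PhiInv)) ∘ₗ (B1B Q).toLinearMap ∘ₗ (dd Q).toLinearMap)
    (g := tm Q v ∘ₗ LinearMap.mulRight k (R.coact b')) (fun b h => ?_) (R.coact a)
  simp only [LinearMap.comp_apply, AlgHom.toLinearMap_apply, LinearMap.mulLeft_apply,
    LinearMap.mulRight_apply]
  rw [conj5, mul_assoc, ← map_mul (V4 v), Lam_al, cl, Lam_K5, P5, tm_mul_left Q v _ _ _ _ rfl,
    Algebra.TensorProduct.one_def]
  simp [T_apply, Q.S_one]

lemma T_mult (hv : IsComodAlgMorphismFromH R v) (E : B →ₗ[k] B) (hE : IsCanonicalProjection Q R v E) (a b' : B) (ha : E a = a) :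
    T Q R v (a * b') = Lam2 Q v (T Q R v b') (T Q R v a ⊗ₜ (A1 Q.PhiInv * B1 Q Q.Phi)) := by
  rw [← step5b Q R v hv, ← step5a, ← ha, M_coact_E Q R v hv E hE, ha, TensorProduct.map_tmul,
    G_apply, map_one, map_one, mul_one, LinearMap.id_apply]

lemma T_mult_sum (hv : IsComodAlgMorphismFromH R v) (E : B →ₗ[k] B) (hE : IsCanonicalProjection Q R v E) (a a' : B) (ha : E a = a)
    (nX : ℕ) (X1 X2 X3 : Fin nX → H)
    (hX : Q.Phi = ∑ i, X1 i ⊗ₜ[k] (X2 i ⊗ₜ[k] X3 i))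
    (mX : ℕ) (C1 C2 : Fin nX → Fin mX → H)
    (hC : ∀ i, Q.comul (X3 i) = ∑ j, C1 i j ⊗ₜ[k] C2 i j)
    (nx : ℕ) (x1 x2 x3 : Fin nx → H)
    (hx : Q.PhiInv = ∑ i, x1 i ⊗ₜ[k] (x2 i ⊗ₜ[k] x3 i)) :
    T Q R v (a * a') = ∑ i, ∑ j, ∑ ix,
      v (X1 i) * T Q R v a * v (Q.S (x1 ix * X2 i) * Q.alpha * x2 ix * C1 i j)
                * T Q R v a' * v (Q.S (x3 ix * C2 i j)) := by
  rw [T_mult Q R v hv E hE a a' ha, hX, hx, map_sum, map_sum, Finset.mul_sum, tmul_sum, map_sum]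
  refine Finset.sum_congr rfl fun i _ => ?_
  rw [B1_tmul, hC i, tmul_sum, tmul_sum, Finset.mul_sum, tmul_sum, map_sum]
  refine Finset.sum_congr rfl fun j _ => ?_
  rw [Finset.sum_mul, tmul_sum, map_sum]
  refine Finset.sum_congr rfl fun l _ => ?_
  rw [A1_apply]
  simp [mul_assoc]

end

end QHproof

/-- The map `θ : A → B^v`, `θ(a) = (p¹ ▷ a) v(p²)` with `p_R = x¹ ⊗ x²βS(x³)`, is an
injective morphism of left `H`-module algebras from `(A, *, 1_B, ▷)` to `B^v` (whose
multiplication is `b ∘ b' = v(X¹) b v(S(x¹X²)αx²X³₁) b' v(S(x³X³₂))`, unit `v(β)` and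
action `h ▷ᵥ b = v(h₁) b v(S(h₂))`). -/
theorem statement5 {k H B : Type*} [Field k] [Ring H] [Algebra k H]
    [Ring B] [Algebra k B] (Q : QuasiHopfAlgebra k H)
    (R : RightComoduleAlgebra Q.toQuasiBialgebra B)
    (v : H →ₐ[k] B) (hv : IsComodAlgMorphismFromH R v)
    (E : B →ₗ[k] B) (hE : IsCanonicalProjection Q R v E)
    (theta : B → B)
    (htheta : ∀ (b : B) (n : ℕ) (p1 p2 p3 : Fin n → H),
      Q.PhiInv = ∑ i, p1 i ⊗ₜ[k] (p2 i ⊗ₜ[k] p3 i) →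
      theta b = ∑ i, E (v (p1 i) * b) * v (p2 i * Q.beta * Q.S (p3 i))) :
    -- θ is injective on A = E(B):
    (∀ a ∈ LinearMap.range E, ∀ a' ∈ LinearMap.range E, theta a = theta a' → a = a')
    -- θ is unital: θ(1_A) = v(β) = 1_{B^v}:
    ∧ (theta (1 : B) = v Q.beta)
    -- θ is multiplicative: θ(a * a') = θ(a) ∘ θ(a') in B^v:
    ∧ (∀ a ∈ LinearMap.range E, ∀ a' ∈ LinearMap.range E,
        ∀ (nX : ℕ) (X1 X2 X3 : Fin nX → H),
        Q.Phi = ∑ i, X1 i ⊗ₜ[k] (X2 i ⊗ₜ[k] X3 i) →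
        ∀ (mX : ℕ) (C1 C2 : Fin nX → Fin mX → H),
        (∀ i, Q.comul (X3 i) = ∑ j, C1 i j ⊗ₜ[k] C2 i j) →
        ∀ (nx : ℕ) (x1 x2 x3 : Fin nx → H),
        Q.PhiInv = ∑ i, x1 i ⊗ₜ[k] (x2 i ⊗ₜ[k] x3 i) →
        theta (E (a * a'))
          = ∑ i, ∑ j, ∑ ix,
              v (X1 i) * theta a * v (Q.S (x1 ix * X2 i) * Q.alpha * x2 ix * C1 i j)
                * theta a' * v (Q.S (x3 ix * C2 i j)))
    -- θ is H-linear: θ(h ▷ a) = h ▷ᵥ θ(a):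
    ∧ (∀ a ∈ LinearMap.range E, ∀ (h : H) (m : ℕ) (d1 d2 : Fin m → H),
        Q.comul h = ∑ j, d1 j ⊗ₜ[k] d2 j →
        theta (E (v h * a)) = ∑ j, v (d1 j) * theta a * v (Q.S (d2 j))) := by
  have ht := QHproof.theta_eq Q R v hv E hE theta htheta
  have hT := QHproof.T_E Q R v hv E hE
  have hEE := QHproof.E_E Q R v hv E hE
  have hR : ∀ a ∈ LinearMap.range E, E a = a := by
    rintro _ ⟨b, rfl⟩
    exact hEE b
  refine ⟨?_, ?_, ?_, ?_⟩
  · intro a ha a' ha' h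
    rw [ht, ht] at h
    rw [← hR a ha, ← hR a' ha']
    exact QHproof.E_eq_of_T Q R v E hE a a' h
  · rw [ht, QHproof.T_one]
  · intro a ha a' _ nX X1 X2 X3 hX mX C1 C2 hC nx x1 x2 x3 hx
    simp only [ht, hT]
    exact QHproof.T_mult_sum Q R v hv E hE a a' (hR a ha) nX X1 X2 X3 hX mX C1 C2 hC
      nx x1 x2 x3 hx
  · intro a _ h m d1 d2 hd
    simp only [ht, hT]
    rw [QHproof.T_v_mul Q R v hv, hd, map_sum]
    simp only [QHproof.NS_tmul]
end

section
/- Let H be a quasi-Hopf algebra, A a left H-module algebra, B = A#H the smash product, and j : H → A#H, j(h) = 1_A#h, the canonical morphism of right H-comodule algebras. Then the projection E : B → B, E(b) = j(q¹)b₍₀₎j(βS(q²b₍₁₎)), is given explicitly by E(a#h) = ε(h)(a#1) for all a ∈ A and h ∈ H. -/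
open TensorProduct BigOperators

/-- A left `H`-module algebra over a quasi-bialgebra `Q` (the Sweedler-type identities are
stated universally over finite representations of the relevant tensors). -/
structure LeftModuleAlgebra {k H : Type*} [Field k] [Ring H] [Algebra k H]
    (Q : QuasiBialgebra k H) (A : Type*) [AddCommGroup A] [Module k A] where
  act : H →ₗ[k] A →ₗ[k] A
  act_one : ∀ a : A, act 1 a = a
  act_mul : ∀ (g h : H) (a : A), act (g * h) a = act g (act h a)
  mul : A →ₗ[k] A →ₗ[k] A
  one : A
  one_mul : ∀ a : A, mul one a = a
  mul_one : ∀ a : A, mul a one = a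
  act_unit : ∀ h : H, act h one = Q.counit h • one
  mul_assoc : ∀ (a b c : A) (n : ℕ) (X1 X2 X3 : Fin n → H),
    Q.Phi = ∑ i, X1 i ⊗ₜ[k] (X2 i ⊗ₜ[k] X3 i) →
    mul (mul a b) c = ∑ i, mul (act (X1 i) a) (mul (act (X2 i) b) (act (X3 i) c))
  act_distrib : ∀ (h : H) (a b : A) (m : ℕ) (d1 d2 : Fin m → H),
    Q.comul h = ∑ j, d1 j ⊗ₜ[k] d2 j →
    act h (mul a b) = ∑ j, mul (act (d1 j) a) (act (d2 j) b)

/-- `mulB` is the multiplication of the smash product `A # H`: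
`(a # h)(a' # h') = (x¹·a)(x²h₁·a') # x³h₂h'`. -/
def IsSmashMul {k H A : Type*} [Field k] [Ring H] [Algebra k H]
    [AddCommGroup A] [Module k A] (Q : QuasiBialgebra k H) (M : LeftModuleAlgebra Q A)
    (mulB : (A ⊗[k] H) →ₗ[k] (A ⊗[k] H) →ₗ[k] (A ⊗[k] H)) : Prop :=
  ∀ (a a' : A) (h h' : H) (n : ℕ) (x1 x2 x3 : Fin n → H),
    Q.PhiInv = ∑ i, x1 i ⊗ₜ[k] (x2 i ⊗ₜ[k] x3 i) →
    ∀ (m : ℕ) (d1 d2 : Fin m → H), Q.comul h = ∑ j, d1 j ⊗ₜ[k] d2 j →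
    mulB (a ⊗ₜ[k] h) (a' ⊗ₜ[k] h')
      = ∑ i, ∑ j, (M.mul (M.act (x1 i) a) (M.act (x2 i * d1 j) a')) ⊗ₜ[k] (x3 i * d2 j * h')

/-- `coactB` is the right `H`-coaction of the smash product `A # H`:
`ρ(a # h) = (x¹·a # x²h₁) ⊗ x³h₂`. -/
def IsSmashCoact {k H A : Type*} [Field k] [Ring H] [Algebra k H]
    [AddCommGroup A] [Module k A] (Q : QuasiBialgebra k H) (M : LeftModuleAlgebra Q A)
    (coactB : (A ⊗[k] H) →ₗ[k] (A ⊗[k] H) ⊗[k] H) : Prop :=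
  ∀ (a : A) (h : H) (n : ℕ) (x1 x2 x3 : Fin n → H),
    Q.PhiInv = ∑ i, x1 i ⊗ₜ[k] (x2 i ⊗ₜ[k] x3 i) →
    ∀ (m : ℕ) (d1 d2 : Fin m → H), Q.comul h = ∑ j, d1 j ⊗ₜ[k] d2 j →
    coactB (a ⊗ₜ[k] h) = ∑ i, ∑ j, ((M.act (x1 i) a) ⊗ₜ[k] (x2 i * d1 j)) ⊗ₜ[k] (x3 i * d2 j)

namespace QH6

lemma rep2 {k V W : Type*} [Field k] [AddCommGroup V] [Module k V] [AddCommGroup W] [Module k W]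
    (t : V ⊗[k] W) : ∃ (n : ℕ) (d1 : Fin n → V) (d2 : Fin n → W), t = ∑ i, d1 i ⊗ₜ[k] d2 i := by
  induction t with
  | zero => exact ⟨0, Fin.elim0, Fin.elim0, by simp⟩
  | tmul x y => exact ⟨1, fun _ => x, fun _ => y, by simp⟩
  | add x y hx hy =>
    obtain ⟨n, a, b, rfl⟩ := hx
    obtain ⟨m, c, d, rfl⟩ := hy
    exact ⟨n + m, Fin.append a c, Fin.append b d, by simp [Fin.sum_univ_add]⟩

lemma rep3 {k V : Type*} [Field k] [AddCommGroup V] [Module k V]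
    (t : V ⊗[k] (V ⊗[k] V)) : ∃ (n : ℕ) (d1 d2 d3 : Fin n → V),
      t = ∑ i, d1 i ⊗ₜ[k] (d2 i ⊗ₜ[k] d3 i) := by
  induction t with
  | zero => exact ⟨0, Fin.elim0, Fin.elim0, Fin.elim0, by simp⟩
  | tmul x y =>
    obtain ⟨n, a, b, rfl⟩ := rep2 y
    exact ⟨n, fun _ => x, a, b, by simp [TensorProduct.tmul_sum]⟩
  | add x y hx hy =>
    obtain ⟨n, a, b, e, rfl⟩ := hx
    obtain ⟨m, c, d, f, rfl⟩ := hy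
    exact ⟨n + m, Fin.append a c, Fin.append b d, Fin.append e f, by simp [Fin.sum_univ_add]⟩

section
variable {k H : Type*} [Field k] [Ring H] [Algebra k H]

/-- `H → k → H ⊗ H`-valued counit in the first place: `(ε ⊗ id)`. -/
noncomputable def epsL (Q : QuasiBialgebra k H) (V : Type*) [Ring V] [Algebra k V] :
    H ⊗[k] V →ₐ[k] V :=
  (Algebra.TensorProduct.lid k V).toAlgHom.comp
    (Algebra.TensorProduct.map Q.counit (AlgHom.id k V))

noncomputable def epsR (Q : QuasiBialgebra k H) (V : Type*) [Ring V] [Algebra k V] :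
    V ⊗[k] H →ₐ[k] V :=
  (Algebra.TensorProduct.rid k k V).toAlgHom.comp
    (Algebra.TensorProduct.map (AlgHom.id k V) Q.counit)

@[simp] lemma epsL_tmul (Q : QuasiBialgebra k H) (V : Type*) [Ring V] [Algebra k V] (h : H) (v : V) :
    epsL Q V (h ⊗ₜ v) = Q.counit h • v := by simp [epsL]

@[simp] lemma epsR_tmul (Q : QuasiBialgebra k H) (V : Type*) [Ring V] [Algebra k V] (h : H) (v : V) :
    epsR Q V (v ⊗ₜ h) = Q.counit h • v := by simp [epsR]

lemma epsL_comul (Q : QuasiBialgebra k H) (h : H) : epsL Q H (Q.comul h) = h := by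
  simp [epsL, Q.counit_comul_left]

lemma epsR_comul (Q : QuasiBialgebra k H) (h : H) : epsR Q H (Q.comul h) = h := by
  simp [epsR, Q.counit_comul_right]

/-- middle counit -/
noncomputable def epsM (Q : QuasiBialgebra k H) (V : Type*) [Ring V] [Algebra k V] :
    H ⊗[k] (H ⊗[k] V) →ₐ[k] H ⊗[k] V :=
  Algebra.TensorProduct.map (AlgHom.id k H) (epsL Q V)

@[simp] lemma epsM_tmul (Q : QuasiBialgebra k H) (V : Type*) [Ring V] [Algebra k V]
    (h g : H) (v : V) :
    epsM Q V (h ⊗ₜ (g ⊗ₜ v)) = Q.counit g • (h ⊗ₜ v) := by simp [epsM]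

lemma epsM_Phi (Q : QuasiBialgebra k H) : epsM Q H Q.Phi = 1 := by
  have h := congrArg (Algebra.TensorProduct.map (AlgHom.id k H)
    (Algebra.TensorProduct.lid k H).toAlgHom) Q.counit_Phi
  rw [map_one] at h
  rw [← h, ← AlgHom.comp_apply, ← Algebra.TensorProduct.map_comp]
  rfl

/-- last counit -/
noncomputable def epsT (Q : QuasiBialgebra k H) :
    H ⊗[k] (H ⊗[k] H) →ₐ[k] H ⊗[k] H :=
  Algebra.TensorProduct.map (AlgHom.id k H) (epsR Q H)

@[simp] lemma epsT_tmul (Q : QuasiBialgebra k H) (h g v : H) :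
    epsT Q (h ⊗ₜ (g ⊗ₜ v)) = Q.counit v • (h ⊗ₜ g) := by simp [epsT]

lemma inv_one {V : Type*} [Ring V] [Algebra k V] (Q : QuasiBialgebra k H)
    (f : H ⊗[k] (H ⊗[k] H) →ₐ[k] V) (hf : f Q.Phi = 1) : f Q.PhiInv = 1 := by
  have := congrArg f Q.Phi_mul_inv
  simpa [hf] using this

lemma cancel_r (Q : QuasiBialgebra k H) {u : H ⊗[k] (H ⊗[k] H)} (h : u * Q.Phi = Q.Phi) :
    u = 1 := by
  have := congrArg (· * Q.PhiInv) h
  simpa [mul_assoc, Q.Phi_mul_inv] using this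

lemma cancel_l (Q : QuasiBialgebra k H) {u : H ⊗[k] (H ⊗[k] H)} (h : Q.Phi * u = Q.Phi) :
    u = 1 := by
  have := congrArg (Q.PhiInv * ·) h
  simpa [← mul_assoc, Q.inv_mul_Phi] using this

lemma epsL_Phi (Q : QuasiBialgebra k H) : epsL Q (H ⊗[k] H) Q.Phi = 1 := by
  have h := congrArg (epsM Q (H ⊗[k] H)) Q.pentagon
  simp only [map_mul] at h
  have h1 : epsM Q (H ⊗[k] H) ((1 : H) ⊗ₜ[k] Q.Phi) = 1 ⊗ₜ epsL Q (H ⊗[k] H) Q.Phi := by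
    simp [epsM]
  have h2 : epsM Q (H ⊗[k] H) ((Algebra.TensorProduct.map (AlgHom.id k H)
          (((Algebra.TensorProduct.assoc k k k H H H).toAlgHom).comp
            (Algebra.TensorProduct.map Q.comul (AlgHom.id k H)))) Q.Phi) = Q.Phi := by
    rw [epsM, ← AlgHom.comp_apply, ← Algebra.TensorProduct.map_comp]
    conv_rhs => rw [← AlgHom.id_apply (R := k) Q.Phi, ← Algebra.TensorProduct.map_id]
    congr 2
    ext x
    · have : ∀ t : H ⊗[k] H, epsL Q (H ⊗[k] H) ((Algebra.TensorProduct.assoc k k k H H H)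
          (t ⊗ₜ 1)) = epsL Q H t ⊗ₜ 1 := by
        intro t
        induction t with
        | zero => simp
        | tmul a b => simp [TensorProduct.smul_tmul']
        | add a b ha hb => simp [TensorProduct.add_tmul, ha, hb]
      simp [this, epsL_comul]
    · simp [Algebra.TensorProduct.one_def]
  have h3 : epsM Q (H ⊗[k] H) ((Algebra.TensorProduct.map (AlgHom.id k H)
          (Algebra.TensorProduct.map (AlgHom.id k H)
            (Algebra.TensorProduct.includeLeft : H →ₐ[k] H ⊗[k] H))) Q.Phi) = 1 := by
    have : ∀ t : H ⊗[k] (H ⊗[k] H), epsM Q (H ⊗[k] H) ((Algebra.TensorProduct.map (AlgHom.id k H)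
          (Algebra.TensorProduct.map (AlgHom.id k H)
            (Algebra.TensorProduct.includeLeft : H →ₐ[k] H ⊗[k] H))) t) =
          Algebra.TensorProduct.map (AlgHom.id k H)
            (Algebra.TensorProduct.includeLeft : H →ₐ[k] H ⊗[k] H) (epsM Q H t) := by
      intro t
      obtain ⟨n, a, b, c, rfl⟩ := rep3 t
      simp
    rw [this, epsM_Phi, map_one]
  have h4 : epsM Q (H ⊗[k] H) ((Algebra.TensorProduct.map (AlgHom.id k H)
          (Algebra.TensorProduct.map (AlgHom.id k H) Q.comul)) Q.Phi) = 1 := by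
    have : ∀ t : H ⊗[k] (H ⊗[k] H), epsM Q (H ⊗[k] H) ((Algebra.TensorProduct.map (AlgHom.id k H)
          (Algebra.TensorProduct.map (AlgHom.id k H) Q.comul)) t) =
          Algebra.TensorProduct.map (AlgHom.id k H) Q.comul (epsM Q H t) := by
      intro t
      obtain ⟨n, a, b, c, rfl⟩ := rep3 t
      simp
    rw [this, epsM_Phi, map_one]
  have h5 : epsM Q (H ⊗[k] H) ((Algebra.TensorProduct.assoc k k k H H (H ⊗[k] H))
          ((Algebra.TensorProduct.map Q.comul (AlgHom.id k (H ⊗[k] H))) Q.Phi)) = Q.Phi := by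
    have : ∀ (t : H ⊗[k] H) (w : H ⊗[k] H), epsM Q (H ⊗[k] H)
          ((Algebra.TensorProduct.assoc k k k H H (H ⊗[k] H)) (t ⊗ₜ w)) = epsR Q H t ⊗ₜ w := by
      intro t w
      induction t with
      | zero => simp
      | tmul a b => simp [TensorProduct.smul_tmul']
      | add a b ha hb => simp [TensorProduct.add_tmul, ha, hb]
    obtain ⟨n, a, b, c, e⟩ := rep3 Q.Phi
    rw [e]
    simp [this, epsR_comul]
  rw [h1, h2, h3, h4, h5, mul_one, one_mul] at h
  have h6 := congrArg (epsL Q (H ⊗[k] H)) (cancel_r Q h)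
  simpa using h6

lemma epsT_Phi (Q : QuasiBialgebra k H) : epsT Q Q.Phi = 1 := by
  let f : H ⊗[k] (H ⊗[k] (H ⊗[k] H)) →ₐ[k] H ⊗[k] (H ⊗[k] H) :=
    Algebra.TensorProduct.map (AlgHom.id k H) (epsM Q H)
  have f_tmul : ∀ (a b c : H) (d : H), f (a ⊗ₜ (b ⊗ₜ (c ⊗ₜ d))) = Q.counit c • (a ⊗ₜ (b ⊗ₜ d)) := by
    intros; simp [f]
  have h := congrArg f Q.pentagon
  simp only [map_mul] at h
  have h1 : f ((1 : H) ⊗ₜ[k] Q.Phi) = 1 := by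
    simp [f, epsM_Phi, Algebra.TensorProduct.one_def]
  have h2 : f ((Algebra.TensorProduct.map (AlgHom.id k H)
          (((Algebra.TensorProduct.assoc k k k H H H).toAlgHom).comp
            (Algebra.TensorProduct.map Q.comul (AlgHom.id k H)))) Q.Phi) = Q.Phi := by
    have : ∀ (a : H) (t : H ⊗[k] H) (w : H), f (a ⊗ₜ
          ((Algebra.TensorProduct.assoc k k k H H H) (t ⊗ₜ w))) = a ⊗ₜ (epsR Q H t ⊗ₜ w) := by
      intro a t w
      induction t with
      | zero => simp
      | tmul x y => simp [f_tmul, ← TensorProduct.smul_tmul']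
      | add x y ha hb => simp [TensorProduct.add_tmul, TensorProduct.tmul_add, ha, hb]
    obtain ⟨n, a, b, c, e⟩ := rep3 Q.Phi
    rw [e]
    simp [this, epsR_comul]
  have h3 : f ((Algebra.TensorProduct.map (AlgHom.id k H)
          (Algebra.TensorProduct.map (AlgHom.id k H)
            (Algebra.TensorProduct.includeLeft : H →ₐ[k] H ⊗[k] H))) Q.Phi) = 
      Algebra.TensorProduct.map (AlgHom.id k H)
            (Algebra.TensorProduct.includeLeft : H →ₐ[k] H ⊗[k] H) (epsT Q Q.Phi) := by
    obtain ⟨n, a, b, c, e⟩ := rep3 Q.Phi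
    rw [e]
    simp [f_tmul]
  have h4 : f ((Algebra.TensorProduct.map (AlgHom.id k H)
          (Algebra.TensorProduct.map (AlgHom.id k H) Q.comul)) Q.Phi) = Q.Phi := by
    have : ∀ (a b : H) (t : H ⊗[k] H), f (a ⊗ₜ (b ⊗ₜ t)) = a ⊗ₜ (b ⊗ₜ epsL Q H t) := by
      intro a b t
      simp [f, epsM]
    obtain ⟨n, a, b, c, e⟩ := rep3 Q.Phi
    rw [e]
    simp [this, epsL_comul]
  have h5 : f ((Algebra.TensorProduct.assoc k k k H H (H ⊗[k] H))
          ((Algebra.TensorProduct.map Q.comul (AlgHom.id k (H ⊗[k] H))) Q.Phi)) = 1 := by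
    have h6 : ∀ (t : H ⊗[k] H) (b c : H), f
          ((Algebra.TensorProduct.assoc k k k H H (H ⊗[k] H)) (t ⊗ₜ (b ⊗ₜ c))) =
          Q.counit b • Algebra.TensorProduct.assoc k k k H H H (t ⊗ₜ c) := by
      intro t b c
      induction t with
      | zero => simp
      | tmul x y => simp [f_tmul]
      | add x y ha hb => simp [TensorProduct.add_tmul, ha, hb]
    have : ∀ t : H ⊗[k] (H ⊗[k] H), f ((Algebra.TensorProduct.assoc k k k H H (H ⊗[k] H))
          ((Algebra.TensorProduct.map Q.comul (AlgHom.id k (H ⊗[k] H))) t)) =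
          Algebra.TensorProduct.assoc k k k H H H
          (Algebra.TensorProduct.map Q.comul (AlgHom.id k H) (epsM Q H t)) := by
      intro t
      obtain ⟨n, a, b, c, rfl⟩ := rep3 t
      simp [h6]
    rw [this, epsM_Phi, map_one, map_one]
  rw [h1, h2, h3, h4, h5, mul_one, one_mul] at h
  have h6 := congrArg (epsT Q) (cancel_l Q h)
  have h7 : ∀ t : H ⊗[k] H, epsT Q (Algebra.TensorProduct.map (AlgHom.id k H)
            (Algebra.TensorProduct.includeLeft : H →ₐ[k] H ⊗[k] H) t) = t := by
    intro t
    obtain ⟨n, a, b, rfl⟩ := rep2 t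
    simp
  rwa [h7, map_one] at h6

/-- `b ⊗ c ⊗ d ↦ b β S(c) α d` -/
noncomputable def G (Q : QuasiHopfAlgebra k H) : H ⊗[k] (H ⊗[k] H) →ₗ[k] H :=
  LinearMap.mul' k H ∘ₗ TensorProduct.map (LinearMap.mulRight k Q.beta)
    (LinearMap.mul' k H ∘ₗ TensorProduct.map (LinearMap.mulRight k Q.alpha ∘ₗ Q.S) LinearMap.id)

@[simp] lemma G_tmul (Q : QuasiHopfAlgebra k H) (b c d : H) :
    G Q (b ⊗ₜ (c ⊗ₜ d)) = b * Q.beta * Q.S c * Q.alpha * d := by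
  simp [G, mul_assoc]

lemma G_Phi (Q : QuasiHopfAlgebra k H) : G Q Q.Phi = 1 := by
  obtain ⟨n, a, b, c, e⟩ := rep3 Q.Phi
  rw [← Q.antipode_Phi n a b c e, e]
  simp

lemma G_left (Q : QuasiHopfAlgebra k H) (b c : H) (w : H ⊗[k] (H ⊗[k] H)) :
    G Q ((b ⊗ₜ Q.comul c) * w) = Q.counit c • (b * G Q w) := by
  obtain ⟨n, x, y, z, rfl⟩ := rep3 w
  obtain ⟨m, d1, d2, e⟩ := rep2 (Q.comul c)
  have h := Q.antipode_left c m d1 d2 e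
  rw [e]
  simp only [Finset.mul_sum, map_sum, Finset.smul_sum, TensorProduct.tmul_sum, Finset.sum_mul,
    Algebra.TensorProduct.tmul_mul_tmul, G_tmul]
  refine Finset.sum_congr rfl fun i _ => ?_
  have h' := congrArg (fun u => b * x i * Q.beta * Q.S (y i) * u * z i) h
  simp only [Finset.mul_sum, Finset.sum_mul, mul_smul_comm, smul_mul_assoc] at h'
  simp only [mul_assoc, Q.S_mul] at h' ⊢
  exact h'

lemma G_right (Q : QuasiHopfAlgebra k H) (b c : H) (w : H ⊗[k] (H ⊗[k] H)) :
    G Q (w * Algebra.TensorProduct.assoc k k k H H H (Q.comul b ⊗ₜ c))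
      = Q.counit b • (G Q w * c) := by
  obtain ⟨n, x, y, z, rfl⟩ := rep3 w
  obtain ⟨m, d1, d2, e⟩ := rep2 (Q.comul b)
  have h := Q.antipode_right b m d1 d2 e
  rw [e]
  simp only [Finset.mul_sum, map_sum, Finset.smul_sum, TensorProduct.sum_tmul, Finset.sum_mul,
    Algebra.TensorProduct.tmul_mul_tmul, G_tmul, Algebra.TensorProduct.assoc_tmul]
  rw [Finset.sum_comm]
  refine Finset.sum_congr rfl fun i _ => ?_
  have h' := congrArg (fun u => x i * u * Q.S (y i) * Q.alpha * z i * c) h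
  simp only [Finset.mul_sum, Finset.sum_mul, mul_smul_comm, smul_mul_assoc] at h'
  simp only [mul_assoc, Q.S_mul] at h' ⊢
  exact h'

noncomputable def F (Q : QuasiHopfAlgebra k H) :
    H ⊗[k] (H ⊗[k] (H ⊗[k] H)) →ₗ[k] H ⊗[k] H :=
  TensorProduct.map LinearMap.id (G Q)

lemma F_left (Q : QuasiHopfAlgebra k H) (P : H ⊗[k] (H ⊗[k] H)) (W : H ⊗[k] (H ⊗[k] (H ⊗[k] H))) :
    F Q ((Algebra.TensorProduct.map (AlgHom.id k H)
          (Algebra.TensorProduct.map (AlgHom.id k H) Q.comul)) P * W)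
      = epsT Q.toQuasiBialgebra P * F Q W := by
  obtain ⟨n, x, y, z, rfl⟩ := rep3 P
  obtain ⟨m, d, w, rfl⟩ := rep2 W
  simp [F, Finset.sum_mul, Finset.mul_sum, G_left]

lemma F_right_aux (Q : QuasiHopfAlgebra k H)
    (T : H ⊗[k] (H ⊗[k] H) →ₗ[k] H ⊗[k] (H ⊗[k] (H ⊗[k] H)))
    (hT : ∀ a b c : H, T (a ⊗ₜ (b ⊗ₜ c)) =
      a ⊗ₜ Algebra.TensorProduct.assoc k k k H H H (Q.comul b ⊗ₜ c))
    (P : H ⊗[k] (H ⊗[k] H)) (W : H ⊗[k] (H ⊗[k] (H ⊗[k] H))) :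
    F Q (W * T P) = F Q W * epsM Q.toQuasiBialgebra H P := by
  have key : ∀ (a : H) (u : H ⊗[k] (H ⊗[k] H)) (x y z : H),
      F Q ((a ⊗ₜ u) * T (x ⊗ₜ (y ⊗ₜ z))) =
        F Q (a ⊗ₜ u) * epsM Q.toQuasiBialgebra H (x ⊗ₜ (y ⊗ₜ z)) := by
    intro a u x y z
    rw [hT, Algebra.TensorProduct.tmul_mul_tmul]
    simp [F, G_right]
  have main : ((LinearMap.mul k (H ⊗[k] (H ⊗[k] (H ⊗[k] H)))).compr₂ (F Q)).compl₂ T =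
      ((LinearMap.mul k (H ⊗[k] H)).comp (F Q)).compl₂
        (epsM Q.toQuasiBialgebra H).toLinearMap := by
    refine TensorProduct.ext' fun a u => LinearMap.ext fun P' => ?_
    obtain ⟨n, x, y, z, rfl⟩ := rep3 P'
    rw [map_sum, map_sum]
    exact Finset.sum_congr rfl fun i _ => key a u (x i) (y i) (z i)
  exact LinearMap.congr_fun (LinearMap.congr_fun main W) P

lemma F_right (Q : QuasiHopfAlgebra k H) (P : H ⊗[k] (H ⊗[k] H)) (W : H ⊗[k] (H ⊗[k] (H ⊗[k] H))) :
    F Q (W * (Algebra.TensorProduct.map (AlgHom.id k H)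
          (((Algebra.TensorProduct.assoc k k k H H H).toAlgHom).comp
            (Algebra.TensorProduct.map Q.comul (AlgHom.id k H)))) P)
      = F Q W * epsM Q.toQuasiBialgebra H P :=
  F_right_aux Q (Algebra.TensorProduct.map (AlgHom.id k H)
          (((Algebra.TensorProduct.assoc k k k H H H).toAlgHom).comp
            (Algebra.TensorProduct.map Q.comul (AlgHom.id k H)))).toLinearMap
    (fun _ _ _ => rfl) P W

lemma F_key (Q : QuasiHopfAlgebra k H) :
    F Q ((Algebra.TensorProduct.assoc k k k H H (H ⊗[k] H))
          ((Algebra.TensorProduct.map Q.comul (AlgHom.id k (H ⊗[k] H))) Q.Phi)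
        * (Algebra.TensorProduct.map (AlgHom.id k H)
          (Algebra.TensorProduct.map (AlgHom.id k H)
            (Algebra.TensorProduct.includeLeft : H →ₐ[k] H ⊗[k] H))) Q.PhiInv) = 1 := by
  set f1 := Algebra.TensorProduct.map (AlgHom.id k H)
          (Algebra.TensorProduct.map (AlgHom.id k H)
            (Algebra.TensorProduct.includeLeft : H →ₐ[k] H ⊗[k] H)) with hf1
  set f2 := Algebra.TensorProduct.map (AlgHom.id k H)
          (Algebra.TensorProduct.map (AlgHom.id k H) Q.comul) with hf2
  set D := (Algebra.TensorProduct.assoc k k k H H (H ⊗[k] H))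
          ((Algebra.TensorProduct.map Q.comul (AlgHom.id k (H ⊗[k] H))) Q.Phi) with hD
  have hp := Q.pentagon
  rw [← hf1, ← hf2, ← hD] at hp
  have a1 : f2 Q.PhiInv * f2 Q.Phi = 1 := by rw [← map_mul, Q.inv_mul_Phi, map_one]
  have a2 : f1 Q.Phi * f1 Q.PhiInv = 1 := by rw [← map_mul, Q.Phi_mul_inv, map_one]
  have e : D * f1 Q.PhiInv = f2 Q.PhiInv * (((1 : H) ⊗ₜ[k] Q.Phi) *
      (Algebra.TensorProduct.map (AlgHom.id k H)
          (((Algebra.TensorProduct.assoc k k k H H H).toAlgHom).comp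
            (Algebra.TensorProduct.map Q.comul (AlgHom.id k H)))) Q.Phi) := by
    have := congrArg (fun u => f2 Q.PhiInv * u * f1 Q.PhiInv) hp
    simp only [mul_assoc, a2, mul_one] at this
    rw [← mul_assoc (f2 Q.PhiInv) (f2 Q.Phi), a1, one_mul] at this
    exact this.symm
  rw [e, hf2, F_left, F_right, epsM_Phi, inv_one _ _ (epsT_Phi _)]
  simp [F, G_Phi, Algebra.TensorProduct.one_def]

end

section
variable {k H A : Type*} [Field k] [Ring H] [Algebra k H] [AddCommGroup A] [Module k A]

lemma mul_j_right (Q : QuasiBialgebra k H) (M : LeftModuleAlgebra Q A)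
    (mulB : (A ⊗[k] H) →ₗ[k] (A ⊗[k] H) →ₗ[k] (A ⊗[k] H))
    (hmulB : IsSmashMul Q M mulB) (c : A) (h g : H) :
    mulB (c ⊗ₜ h) (M.one ⊗ₜ g) = c ⊗ₜ (h * g) := by
  obtain ⟨n, x, y, z, e⟩ := rep3 Q.PhiInv
  obtain ⟨m, d1, d2, e'⟩ := rep2 (Q.comul h)
  rw [hmulB c M.one h g n x y z e m d1 d2 e']
  have h1 := inv_one Q _ (epsM_Phi Q)
  rw [e] at h1
  have h2 := epsL_comul Q h
  rw [e'] at h2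
  simp only [map_sum, epsM_tmul, epsL_tmul] at h1 h2
  have h3 := congrArg (TensorProduct.map (M.act.flip c) (LinearMap.mulRight k (h * g))) h1
  simp only [map_sum, map_smul, TensorProduct.map_tmul, Algebra.TensorProduct.one_def,
    LinearMap.flip_apply, LinearMap.mulRight_apply, M.act_one, one_mul] at h3
  rw [← h3]
  refine Finset.sum_congr rfl fun i _ => ?_
  conv_rhs => rw [← h2]
  simp [M.act_mul, M.act_unit, M.mul_one, Finset.sum_mul, Finset.mul_sum, TensorProduct.tmul_sum,
    TensorProduct.smul_tmul', Finset.smul_sum, smul_smul, mul_assoc, mul_comm]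

lemma mul_j_left (Q : QuasiBialgebra k H) (M : LeftModuleAlgebra Q A)
    (mulB : (A ⊗[k] H) →ₗ[k] (A ⊗[k] H) →ₗ[k] (A ⊗[k] H))
    (hmulB : IsSmashMul Q M mulB) (c : A) (h g : H) :
    mulB (M.one ⊗ₜ g) (c ⊗ₜ h)
      = TensorProduct.map (M.act.flip c) (LinearMap.mulRight k h) (Q.comul g) := by
  obtain ⟨n, x, y, z, e⟩ := rep3 Q.PhiInv
  obtain ⟨m, d1, d2, e'⟩ := rep2 (Q.comul g)
  rw [hmulB M.one c g h n x y z e m d1 d2 e']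
  have h1 := inv_one Q _ (epsL_Phi Q)
  rw [e] at h1
  simp only [map_sum, epsL_tmul] at h1
  rw [← one_mul (Q.comul g), ← h1, e']
  simp [M.act_unit, M.one_mul, Finset.sum_mul, Finset.mul_sum, TensorProduct.smul_tmul']
  try rw [Finset.sum_comm]

lemma hE_fintype {k V W X : Type*} [Field k] [AddCommGroup V] [Module k V] [AddCommGroup W]
    [Module k W] [AddCommGroup X] (t : V ⊗[k] W) (f : V → W → X) (e : X)
    (h : ∀ (p : ℕ) (b0 : Fin p → V) (b1 : Fin p → W), t = ∑ j, b0 j ⊗ₜ[k] b1 j →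
      e = ∑ j, f (b0 j) (b1 j)) {ι : Type*} [Fintype ι] (b0 : ι → V) (b1 : ι → W)
    (ht : t = ∑ j, b0 j ⊗ₜ[k] b1 j) : e = ∑ j, f (b0 j) (b1 j) := by
  rw [h (Fintype.card ι) (b0 ∘ (Fintype.equivFin ι).symm) (b1 ∘ (Fintype.equivFin ι).symm)]
  · exact (Fintype.equivFin ι).symm.sum_comp (fun j => f (b0 j) (b1 j))
  · rw [ht]
    exact ((Fintype.equivFin ι).symm.sum_comp (fun j => b0 j ⊗ₜ[k] b1 j)).symm

end
end QH6

/-- For `B = A # H` with the canonical map `j(h) = 1_A # h`, the projection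
`E(b) = j(q¹) b₍₀₎ j(βS(q² b₍₁₎))` is given by `E(a # h) = ε(h)(a # 1)`. -/
theorem statement6 {k H A : Type*} [Field k] [Ring H] [Algebra k H]
    [AddCommGroup A] [Module k A] (Q : QuasiHopfAlgebra k H)
    (M : LeftModuleAlgebra Q.toQuasiBialgebra A)
    (mulB : (A ⊗[k] H) →ₗ[k] (A ⊗[k] H) →ₗ[k] (A ⊗[k] H))
    (hmulB : IsSmashMul Q.toQuasiBialgebra M mulB)
    (coactB : (A ⊗[k] H) →ₗ[k] (A ⊗[k] H) ⊗[k] H)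
    (hcoactB : IsSmashCoact Q.toQuasiBialgebra M coactB)
    (E : (A ⊗[k] H) →ₗ[k] A ⊗[k] H)
    (hE : ∀ (b : A ⊗[k] H) (n : ℕ) (X1 X2 X3 : Fin n → H),
      Q.Phi = ∑ i, X1 i ⊗ₜ[k] (X2 i ⊗ₜ[k] X3 i) →
      ∀ (p : ℕ) (b0 : Fin p → A ⊗[k] H) (b1 : Fin p → H),
        coactB b = ∑ j, b0 j ⊗ₜ[k] b1 j →
        E b = ∑ i, ∑ j, mulB (mulB (M.one ⊗ₜ[k] X1 i) (b0 j))
          (M.one ⊗ₜ[k] (Q.beta * Q.S (Q.Sinv (Q.alpha * X3 i) * X2 i * b1 j)))) :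
    ∀ (a : A) (h : H), E (a ⊗ₜ[k] h) = Q.counit h • (a ⊗ₜ[k] (1 : H)) := by
  intro a h
  obtain ⟨n, X1, X2, X3, eX⟩ := QH6.rep3 Q.Phi
  obtain ⟨m, x1, x2, x3, ex⟩ := QH6.rep3 Q.PhiInv
  obtain ⟨p, d1, d2, ed⟩ := QH6.rep2 (Q.comul h)
  have hco := hcoactB a h m x1 x2 x3 ex p d1 d2 ed
  rw [← Fintype.sum_prod_type'] at hco
  have key := QH6.hE_fintype (coactB (a ⊗ₜ[k] h))
    (fun b0 b1 => ∑ i, mulB (mulB (M.one ⊗ₜ[k] X1 i) b0)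
          (M.one ⊗ₜ[k] (Q.beta * Q.S (Q.Sinv (Q.alpha * X3 i) * X2 i * b1)))) (E (a ⊗ₜ[k] h))
    (fun p b0 b1 hb => by
      rw [hE _ n X1 X2 X3 eX p b0 b1 hb, Finset.sum_comm]) _ _ hco
  rw [key]
  choose r c1 c2 ec using fun i => QH6.rep2 (Q.comul (X1 i))
  simp only [QH6.mul_j_left _ M mulB hmulB, ec, map_sum, TensorProduct.map_tmul,
    LinearMap.flip_apply, LinearMap.mulRight_apply, LinearMap.sum_apply,
    QH6.mul_j_right _ M mulB hmulB, Q.S_mul, Q.S_Sinv, ← M.act_mul]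
  have hF := congrArg (TensorProduct.map (M.act.flip a) (LinearMap.id : H →ₗ[k] H)) (QH6.F_key Q)
  rw [eX, ex] at hF
  simp only [map_sum, Algebra.TensorProduct.map_tmul, ec, TensorProduct.sum_tmul,
    Algebra.TensorProduct.assoc_tmul, AlgHom.id_apply, Algebra.TensorProduct.includeLeft_apply,
    Finset.sum_mul, Finset.mul_sum, Algebra.TensorProduct.tmul_mul_tmul, QH6.F,
    TensorProduct.map_tmul, LinearMap.id_apply, QH6.G_tmul, LinearMap.flip_apply,
    Algebra.TensorProduct.one_def, M.act_one, mul_one] at hF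
  rw [← hF, Fintype.sum_prod_type]
  have hb := Q.antipode_right h p d1 d2 ed
  rw [Finset.smul_sum]
  refine Finset.sum_congr rfl fun l _ => ?_
  rw [Finset.sum_comm, Finset.smul_sum]
  refine Finset.sum_congr rfl fun i _ => ?_
  rw [Finset.sum_comm, Finset.smul_sum]
  refine Finset.sum_congr rfl fun s _ => ?_
  dsimp only
  rw [← TensorProduct.tmul_sum, ← TensorProduct.tmul_smul]
  congr 1
  have h' := congrArg (fun u => c2 i s * x2 l * u * Q.S (X2 i * x3 l) * Q.alpha * X3 i) hb
  simp only [Finset.mul_sum, Finset.sum_mul, mul_smul_comm, smul_mul_assoc] at h'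
  simp only [mul_assoc, Q.S_mul] at h' ⊢
  exact h'
end

section
/- Let H be a quasi-Hopf algebra, B a right H-comodule algebra, and v : H → B a morphism of right H-comodule algebras. Define E : B → B by E(b) = v(q¹)b₍₀₎v(βS(q²b₍₁₎)). Then for every h ∈ H, E(v(h)) = ε(h)1_B; that is, h▷1_B = ε(h)1_B for the action h▷b = E(v(h)b). -/
open TensorProduct BigOperators

theorem exists_fin_rep {k M N : Type*} [Field k] [AddCommGroup M] [Module k M]
    [AddCommGroup N] [Module k N] (x : M ⊗[k] N) :
    ∃ (n : ℕ) (a : Fin n → M) (b : Fin n → N), x = ∑ i, a i ⊗ₜ[k] b i := by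
  induction x using TensorProduct.induction_on with
  | zero => exact ⟨0, Fin.elim0, Fin.elim0, by simp⟩
  | tmul a b => exact ⟨1, fun _ => a, fun _ => b, by simp⟩
  | add x y hx hy =>
    obtain ⟨n, a, b, rfl⟩ := hx
    obtain ⟨m, c, d, rfl⟩ := hy
    exact ⟨n + m, Fin.append a c, Fin.append b d, by simp [Fin.sum_univ_add]⟩

theorem exists_fin_rep3 {k M N P : Type*} [Field k] [AddCommGroup M] [Module k M]
    [AddCommGroup N] [Module k N] [AddCommGroup P] [Module k P] (x : M ⊗[k] (N ⊗[k] P)) :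
    ∃ (n : ℕ) (a : Fin n → M) (b : Fin n → N) (c : Fin n → P),
      x = ∑ i, a i ⊗ₜ[k] (b i ⊗ₜ[k] c i) := by
  induction x using TensorProduct.induction_on with
  | zero => exact ⟨0, Fin.elim0, Fin.elim0, Fin.elim0, by simp⟩
  | tmul a y =>
    obtain ⟨n, b, c, rfl⟩ := exists_fin_rep y
    exact ⟨n, fun _ => a, b, c, by rw [TensorProduct.tmul_sum]⟩
  | add x y hx hy =>
    obtain ⟨n, a, b, c, rfl⟩ := hx
    obtain ⟨m, a', b', c', rfl⟩ := hy
    exact ⟨n + m, Fin.append a a', Fin.append b b', Fin.append c c', by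
      simp [Fin.sum_univ_add]⟩

/-- `E(v(h)) = ε(h)1_B`, i.e. `h ▷ 1_B = ε(h)1_B` for the action `h ▷ b = E(v(h)b)`. -/
theorem statement10 {k H B : Type*} [Field k] [Ring H] [Algebra k H]
    [Ring B] [Algebra k B] (Q : QuasiHopfAlgebra k H)
    (R : RightComoduleAlgebra Q.toQuasiBialgebra B)
    (v : H →ₐ[k] B) (hv : IsComodAlgMorphismFromH R v)
    (E : B →ₗ[k] B) (hE : IsCanonicalProjection Q R v E) :
    ∀ h : H, E (v h) = Q.counit h • (1 : B) := by
  intro h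
  obtain ⟨n, X1, X2, X3, hX⟩ := exists_fin_rep3 Q.Phi
  obtain ⟨p, d1, d2, hd⟩ := exists_fin_rep (Q.comul h)
  have hc : R.coact (v h) = ∑ j, v (d1 j) ⊗ₜ[k] d2 j := by
    rw [hv.1 h, hd, map_sum]
    simp
  rw [hE (v h) n X1 X2 X3 hX p (fun j => v (d1 j)) d2 hc]
  have key : ∀ i, ∑ j, v (X1 i) * v (d1 j) *
      v (Q.beta * Q.S (Q.Sinv (Q.alpha * X3 i) * X2 i * d2 j))
      = Q.counit h • v (X1 i * Q.beta * Q.S (X2 i) * Q.alpha * X3 i) := by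
    intro i
    have h1 := Q.antipode_right h p d1 d2 hd
    have h2 : X1 i * (∑ j, d1 j * Q.beta * Q.S (d2 j)) * (Q.S (X2 i) * Q.alpha * X3 i)
        = Q.counit h • (X1 i * Q.beta * Q.S (X2 i) * Q.alpha * X3 i) := by
      rw [h1]
      simp [mul_assoc]
    rw [← map_smul, ← h2, Finset.mul_sum, Finset.sum_mul, map_sum]
    refine Finset.sum_congr rfl fun j _ => ?_
    rw [← map_mul, ← map_mul, Q.S_mul, Q.S_mul, Q.S_Sinv]
    simp only [mul_assoc]
  rw [Finset.sum_congr rfl fun i _ => key i, ← Finset.smul_sum, ← map_sum,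
    Q.antipode_Phi n X1 X2 X3 hX, map_one]
end
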